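/- arXiv:1710.07688 — 3 statements merged into one kernel-verified Lean document; each statement's English description precedes it below -/
import Mathlib

section
/- Let X be a smooth vector field on ℝ^n whose flow map (t,x) ↦ e^{tX}(x) is defined for all t ∈ ℝ and is a polynomial in t and x (of some bounded degree). Then X is divergence-free, and the flow e^{tX} is volume-preserving: det D_x e^{tX}(x) = 1 for all t, x. -/
/-!
If the flow `φ` of `X` is polynomial in time and space, then `X = ∂ₜφ|ₜ₌₀` is polynomial too, and
differentiating `∂ₜφ = X ∘ φ` in space gives `∂ₜJ = (DX ∘ φ) J` for the spatial Jacobian `J`. By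
Jacobi's formula `∂ₜ det J = (div X ∘ φ) det J`, so the polynomial `det J` divides its own time
derivative. Comparing degrees in `t`, this is possible only if `∂ₜ det J = 0`. Hence `det J` keeps
its value `1` from `t = 0`, and then `div X ∘ φ = 0`, which at `t = 0` reads `div X = 0`.
-/

open MvPolynomial

section Derivations

theorem derivation_prod {R A M ι : Type*} [CommSemiring R] [CommSemiring A] [Algebra R A]
    [AddCommMonoid M] [Module R M] [Module A M] [DecidableEq ι] (D : Derivation R A M)
    (s : Finset ι) (f : ι → A) :
    D (∏ i ∈ s, f i) = ∑ i ∈ s, (∏ j ∈ s.erase i, f j) • D (f i) := by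
  induction s using Finset.induction_on with
  | empty => simp
  | insert a s ha ih =>
    have prod_erase_insert {i : ι} (hi : i ∈ s) :
        ∏ j ∈ (insert a s).erase i, f j = f a * ∏ j ∈ s.erase i, f j := by
      rw [Finset.erase_insert_of_ne (ne_of_mem_of_not_mem hi ha).symm,
        Finset.prod_insert fun h => ha (Finset.mem_of_mem_erase h)]
    rw [Finset.prod_insert ha, D.leibniz, ih, Finset.sum_insert ha, Finset.erase_insert ha,
      Finset.smul_sum, add_comm]
    congr 1
    exact Finset.sum_congr rfl fun i hi => by rw [prod_erase_insert hi, mul_smul]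

variable {R A : Type*} [CommRing R] [CommRing A] [Algebra R A]
  {ι : Type*} [Fintype ι] [DecidableEq ι]

theorem derivation_det_eq_sum_det_updateCol (D : Derivation R A A) (M : Matrix ι ι A) :
    D M.det = ∑ i, (M.updateCol i fun k => D (M k i)).det := by
  simp only [Matrix.det_apply, map_sum, Derivation.map_smul_of_tower, derivation_prod,
    Finset.smul_sum]
  rw [Finset.sum_comm]
  refine Finset.sum_congr rfl fun i _ => Finset.sum_congr rfl fun σ _ => ?_
  rw [← Finset.prod_erase_mul _ _ (Finset.mem_univ i), Matrix.updateCol_self, smul_eq_mul]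
  congr 2
  exact Finset.prod_congr rfl fun j hj => by rw [Matrix.updateCol_ne (Finset.ne_of_mem_erase hj)]

theorem derivation_det (D : Derivation R A A) (M : Matrix ι ι A) :
    D M.det = (M.adjugate * M.map D).trace := by
  rw [derivation_det_eq_sum_det_updateCol]
  refine Finset.sum_congr rfl fun i _ => ?_
  rw [← Matrix.cramer_apply, Matrix.cramer_eq_adjugate_mulVec]
  rfl

theorem derivation_det_of_map_eq_mul {D : Derivation R A A} {M B : Matrix ι ι A}
    (h : M.map D = B * M) : D M.det = B.trace * M.det := by
  rw [derivation_det, h, Matrix.trace_mul_comm, Matrix.mul_assoc, Matrix.mul_adjugate,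
    Matrix.mul_smul, Matrix.mul_one, Matrix.trace_smul, smul_eq_mul, mul_comm]

theorem derivation_aeval {σ : Type*} [Fintype σ] (D : Derivation R A A) (q : σ → A)
    (f : MvPolynomial σ R) : D (aeval q f) = ∑ k, aeval q (pderiv k f) * D (q k) := by
  classical
  induction f using MvPolynomial.induction_on with
  | C a => simp
  | add f g hf hg => simp [hf, hg, add_mul, Finset.sum_add_distrib]
  | mul_X f k hf =>
    simp [hf, Derivation.leibniz, pderiv_X, Pi.single_apply, apply_ite, add_mul,
      Finset.sum_add_distrib, Finset.mul_sum, mul_assoc]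

theorem pderiv_comm {σ : Type*} (i j : σ) (f : MvPolynomial σ R) :
    pderiv i (pderiv j f) = pderiv j (pderiv i f) := by
  classical
  have commutator_eq_zero : ⁅pderiv (R := R) i, pderiv (R := R) j⁆ = 0 :=
    derivation_ext fun k => by
      simp [Derivation.commutator_apply, pderiv_X, Pi.single_apply, apply_ite]
  rw [← sub_eq_zero, ← Derivation.commutator_apply, commutator_eq_zero, Derivation.zero_apply]

end Derivations

section Jacobian

variable {ι κ σ τ R : Type*} [CommRing R]

/-- The Jacobian matrix `∂pᵢ/∂xⱼ` of a family of polynomials. The divergence of a polynomial vector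
field is its trace. -/
noncomputable def jacobianMatrix (p : κ → MvPolynomial σ R) :
    Matrix κ σ (MvPolynomial σ R) :=
  Matrix.of fun i j => pderiv j (p i)

theorem jacobianMatrix_bind₁ [Fintype σ] (q : σ → MvPolynomial τ R)
    (p : κ → MvPolynomial σ R) :
    jacobianMatrix (fun i => bind₁ q (p i)) =
      (jacobianMatrix p).map (bind₁ q) * jacobianMatrix q :=
  Matrix.ext fun i j => derivation_aeval (pderiv j) q (p i)

/-- The Jacobian matrix in the space variables `Sum.inl _` of a family of polynomials in space and
time, time being the variable `Sum.inr ()`. -/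
noncomputable def spatialJacobian (p : κ → MvPolynomial (ι ⊕ Unit) R) :
    Matrix κ ι (MvPolynomial (ι ⊕ Unit) R) :=
  (jacobianMatrix p).toCols₁

/-- Specialization of the time variable of a polynomial in space and time to the value `t`. -/
noncomputable def atTime (t : R) : MvPolynomial (ι ⊕ Unit) R →ₐ[R] MvPolynomial ι R :=
  bind₁ (Sum.elim X fun _ => C t)

theorem eval_atTime (t : R) (x : ι → R) (f : MvPolynomial (ι ⊕ Unit) R) :
    eval x (atTime t f) = eval (Sum.elim x fun _ => t) f := by
  refine (eval₂Hom_bind₁ (RingHom.id R) x _ f).trans ?_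
  congr 2
  ext (i | i) <;> simp

theorem eval_bind₁ (q : σ → MvPolynomial τ R) (y : τ → R) (f : MvPolynomial σ R) :
    eval y (bind₁ q f) = eval (fun i => eval y (q i)) f :=
  eval₂Hom_bind₁ (RingHom.id R) y q f

theorem jacobianMatrix_atTime (p : κ → MvPolynomial (ι ⊕ Unit) R) (t : R) :
    jacobianMatrix (fun i => atTime t (p i)) = (spatialJacobian p).map (atTime t) :=
  Matrix.ext fun i j => (aeval_sumElim_pderiv_inl (p i) (fun _ => t) j).symm

/-- A polynomial in space and time as a univariate polynomial in time over the polynomials in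
space; degree arguments in the time variable are carried out there. -/
noncomputable def timeExpansion :
    MvPolynomial (ι ⊕ Unit) R ≃ₐ[R] Polynomial (MvPolynomial ι R) :=
  (renameEquiv R (Equiv.optionEquivSumPUnit ι).symm).trans (optionEquivLeft R ι)

@[simp]
theorem timeExpansion_X_inl (i : ι) :
    timeExpansion (X (Sum.inl i) : MvPolynomial (ι ⊕ Unit) R) = Polynomial.C (X i) := by
  simp [timeExpansion]

@[simp]
theorem timeExpansion_X_inr (u : Unit) :
    timeExpansion (X (Sum.inr u) : MvPolynomial (ι ⊕ Unit) R) = Polynomial.X := by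
  simp [timeExpansion]

@[simp]
theorem timeExpansion_C (a : R) :
    timeExpansion (C a : MvPolynomial (ι ⊕ Unit) R) = Polynomial.C (C a) := by
  simp [timeExpansion]

theorem derivative_timeExpansion (f : MvPolynomial (ι ⊕ Unit) R) :
    (timeExpansion f).derivative = timeExpansion (pderiv (Sum.inr ()) f) := by
  induction f using MvPolynomial.induction_on with
  | C a => simp
  | add f g hf hg => simp [hf, hg]
  | mul_X f k hf => rcases k with i | _ <;> simp [hf, mul_comm]

theorem eval_timeExpansion (f : MvPolynomial (ι ⊕ Unit) R) (t : R) :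
    (timeExpansion f).eval (C t) = atTime t f := by
  induction f using MvPolynomial.induction_on with
  | C a => simp [atTime]
  | add f g hf hg => simp [hf, hg]
  | mul_X f k hf => rcases k with i | _ <;> simp [hf, atTime]

theorem eq_one_of_dvd_pderiv_inr [IsDomain R] [CharZero R] {f : MvPolynomial (ι ⊕ Unit) R}
    (hdvd : f ∣ pderiv (Sum.inr ()) f) (h0 : atTime 0 f = 1) : f = 1 := by
  have dvd_derivative : timeExpansion f ∣ (timeExpansion f).derivative := by
    rw [derivative_timeExpansion]
    exact map_dvd timeExpansion hdvd
  have eq_C := Polynomial.eq_C_of_derivative_eq_zero <|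
    Polynomial.dvd_derivative_iff.1 dvd_derivative
  have coeff_zero : (timeExpansion f).coeff 0 = 1 := by
    rw [Polynomial.coeff_zero_eq_eval_zero, ← C_0 (σ := ι) (R := R), eval_timeExpansion, h0]
  rw [coeff_zero, Polynomial.C_1] at eq_C
  exact (map_eq_one_iff timeExpansion timeExpansion.injective).1 eq_C

end Jacobian

section PolynomialFlow

variable {ι R : Type*} [CommRing R]

/-- The family `p` of polynomials in space and time is the flow of the polynomial vector field `V`:
it solves the formal initial value problem `∂ₜp = V ∘ p`, `p|ₜ₌₀ = id`. -/
structure IsPolynomialFlow (V : ι → MvPolynomial ι R) (p : ι → MvPolynomial (ι ⊕ Unit) R) :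
    Prop where
  atTime_zero : ∀ i, atTime 0 (p i) = X i
  pderiv_time : ∀ i, pderiv (Sum.inr ()) (p i) = bind₁ p (V i)

namespace IsPolynomialFlow

variable {V : ι → MvPolynomial ι R} {p : ι → MvPolynomial (ι ⊕ Unit) R}

theorem atTime_zero_bind₁ (h : IsPolynomialFlow V p) (f : MvPolynomial ι R) :
    atTime 0 (bind₁ p f) = f := by
  rw [atTime, bind₁_bind₁]
  exact (congrArg (fun q => bind₁ q f) (funext h.atTime_zero)).trans (aeval_X_left_apply f)

theorem spatialJacobian_map_atTime_zero [DecidableEq ι] (h : IsPolynomialFlow V p) :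
    (spatialJacobian p).map (atTime 0) = 1 := by
  rw [← jacobianMatrix_atTime, funext h.atTime_zero]
  ext1 i j
  simp [jacobianMatrix, Matrix.one_apply, Pi.single_apply]

variable [Fintype ι]

theorem spatialJacobian_map_pderiv_time (h : IsPolynomialFlow V p) :
    (spatialJacobian p).map (pderiv (Sum.inr ())) =
      (jacobianMatrix V).map (bind₁ p) * spatialJacobian p := by
  ext1 i j
  calc pderiv (Sum.inr ()) (pderiv (Sum.inl j) (p i))
      = pderiv (Sum.inl j) (bind₁ p (V i)) := by rw [pderiv_comm, h.pderiv_time]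
    _ = ((jacobianMatrix V).map (bind₁ p) * jacobianMatrix p) i (Sum.inl j) := by
      rw [← jacobianMatrix_bind₁]; rfl

theorem pderiv_time_det_spatialJacobian [DecidableEq ι] (h : IsPolynomialFlow V p) :
    pderiv (Sum.inr ()) (spatialJacobian p).det =
      bind₁ p (jacobianMatrix V).trace * (spatialJacobian p).det := by
  rw [derivation_det_of_map_eq_mul h.spatialJacobian_map_pderiv_time, AddMonoidHom.map_trace]

variable [IsDomain R] [CharZero R]

theorem det_spatialJacobian [DecidableEq ι] (h : IsPolynomialFlow V p) :
    (spatialJacobian p).det = 1 := by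
  refine eq_one_of_dvd_pderiv_inr (Dvd.intro_left _ h.pderiv_time_det_spatialJacobian.symm) ?_
  rw [AlgHom.map_det, AlgHom.mapMatrix_apply, h.spatialJacobian_map_atTime_zero, Matrix.det_one]

theorem trace_jacobianMatrix (h : IsPolynomialFlow V p) : (jacobianMatrix V).trace = 0 := by
  classical
  have bind₁_trace : bind₁ p (jacobianMatrix V).trace = 0 := by
    simpa [h.det_spatialJacobian] using h.pderiv_time_det_spatialJacobian.symm
  rw [← h.atTime_zero_bind₁ (jacobianMatrix V).trace, bind₁_trace, map_zero]

end IsPolynomialFlow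

end PolynomialFlow

section Analysis

variable {𝕜 ι σ : Type*} [NontriviallyNormedField 𝕜]

theorem hasFDerivAt_eval [Fintype σ] (f : MvPolynomial σ 𝕜) (x : σ → 𝕜) :
    HasFDerivAt (fun y => eval y f)
      (∑ k, eval x (pderiv k f) • (ContinuousLinearMap.proj k : (σ → 𝕜) →L[𝕜] 𝕜)) x := by
  classical
  induction f using MvPolynomial.induction_on with
  | C a =>
    simp only [eval_C]
    refine (hasFDerivAt_const a x).congr_fderiv ?_
    ext v
    simp
  | add f g hf hg =>
    simp only [map_add]
    refine (hf.fun_add hg).congr_fderiv ?_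
    ext v
    simp [add_mul, Finset.sum_add_distrib]
  | mul_X f k hf =>
    simp only [map_mul, eval_X]
    refine (hf.fun_mul (hasFDerivAt_apply k x)).congr_fderiv ?_
    ext v
    simp [Derivation.leibniz, pderiv_X, Pi.single_apply, apply_ite, add_mul,
      Finset.sum_add_distrib, Finset.mul_sum, mul_assoc]

theorem hasDerivAt_eval_time (f : MvPolynomial (ι ⊕ Unit) 𝕜) (x : ι → 𝕜) (t : 𝕜) :
    HasDerivAt (fun s => eval (Sum.elim x fun _ => s) f)
      (eval (Sum.elim x fun _ => t) (pderiv (Sum.inr ()) f)) t := by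
  have eval_eq (g : MvPolynomial (ι ⊕ Unit) 𝕜) (s : 𝕜) :
      eval (Sum.elim x fun _ => s) g = ((timeExpansion g).map (eval x)).eval s := by
    rw [← eval_atTime, ← eval_timeExpansion, ← Polynomial.eval_map_apply, eval_C]
  simp only [eval_eq, ← derivative_timeExpansion, ← Polynomial.derivative_map]
  exact Polynomial.hasDerivAt _ t

theorem toLinearMap_fderiv_eval [Fintype σ] [DecidableEq σ] (p : ι → MvPolynomial σ 𝕜)
    (x : σ → 𝕜) :
    (fderiv 𝕜 (fun y i => eval y (p i)) x).toLinearMap =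
      Matrix.toLin' ((jacobianMatrix p).map (eval x)) := by
  rw [(hasFDerivAt_pi.2 fun i => hasFDerivAt_eval (p i) x).fderiv]
  ext
  simp [jacobianMatrix, Pi.single_apply]

theorem trace_fderiv_eval [Fintype ι] (p : ι → MvPolynomial ι 𝕜) (x : ι → 𝕜) :
    LinearMap.trace 𝕜 (ι → 𝕜) (fderiv 𝕜 (fun y i => eval y (p i)) x).toLinearMap =
      eval x (jacobianMatrix p).trace := by
  classical
  rw [toLinearMap_fderiv_eval, Matrix.trace_toLin'_eq, AddMonoidHom.map_trace]

theorem det_fderiv_eval [Fintype ι] [DecidableEq ι] (p : ι → MvPolynomial ι 𝕜) (x : ι → 𝕜) :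
    LinearMap.det (fderiv 𝕜 (fun y i => eval y (p i)) x).toLinearMap =
      eval x (jacobianMatrix p).det := by
  rw [toLinearMap_fderiv_eval, LinearMap.det_toLin', RingHom.map_det, RingHom.mapMatrix_apply]

variable {X : (ι → 𝕜) → ι → 𝕜} {φ : 𝕜 → (ι → 𝕜) → ι → 𝕜}
  {p : ι → MvPolynomial (ι ⊕ Unit) 𝕜}

theorem eval_pderiv_time_of_flow
    (hflow : ∀ t x, HasDerivAt (fun s => φ s x) (X (φ t x)) t)
    (hp : ∀ t x i, φ t x i = eval (Sum.elim x fun _ => t) (p i)) (t : 𝕜) (x : ι → 𝕜) (i : ι) :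
    eval (Sum.elim x fun _ => t) (pderiv (Sum.inr ()) (p i)) = X (φ t x) i := by
  refine (hasDerivAt_eval_time (p i) x t).unique ?_
  simpa only [hp] using hasDerivAt_pi.1 (hflow t x) i

theorem vectorField_eq_eval_of_flow (hflow0 : ∀ x, φ 0 x = x)
    (hflow : ∀ t x, HasDerivAt (fun s => φ s x) (X (φ t x)) t)
    (hp : ∀ t x i, φ t x i = eval (Sum.elim x fun _ => t) (p i)) :
    X = fun x i => eval x (atTime 0 (pderiv (Sum.inr ()) (p i))) := by
  funext x i
  rw [eval_atTime, eval_pderiv_time_of_flow hflow hp, hflow0]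

theorem isPolynomialFlow_of_flow (hflow0 : ∀ x, φ 0 x = x)
    (hflow : ∀ t x, HasDerivAt (fun s => φ s x) (X (φ t x)) t)
    (hp : ∀ t x i, φ t x i = eval (Sum.elim x fun _ => t) (p i)) :
    IsPolynomialFlow (fun i => atTime 0 (pderiv (Sum.inr ()) (p i))) p where
  atTime_zero i := MvPolynomial.funext fun x => by
    rw [eval_atTime, ← hp, hflow0, eval_X]
  pderiv_time i := MvPolynomial.funext fun y => by
    obtain ⟨x, t, rfl⟩ : ∃ (x : ι → 𝕜) (t : 𝕜), y = Sum.elim x fun _ => t :=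
      ⟨y ∘ Sum.inl, y (Sum.inr ()), (Sum.elim_comp_inl_inr y).symm⟩
    rw [eval_pderiv_time_of_flow hflow hp, vectorField_eq_eval_of_flow hflow0 hflow hp, eval_bind₁,
      funext (hp t x)]

end Analysis

theorem stmt8_general {𝕜 ι : Type*} [NontriviallyNormedField 𝕜] [CharZero 𝕜] [Finite ι]
    (X : (ι → 𝕜) → (ι → 𝕜)) (φ : 𝕜 → (ι → 𝕜) → (ι → 𝕜))
    (hflow0 : ∀ x, φ 0 x = x)
    (hflow : ∀ t x, HasDerivAt (fun s => φ s x) (X (φ t x)) t)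
    (hpoly : ∃ p : ι → MvPolynomial (ι ⊕ Unit) 𝕜,
      ∀ t x i, φ t x i = MvPolynomial.eval (Sum.elim x fun _ => t) (p i)) :
    (∀ x, LinearMap.trace 𝕜 (ι → 𝕜) (fderiv 𝕜 X x).toLinearMap = 0) ∧
    (∀ t x, LinearMap.det (fderiv 𝕜 (φ t) x).toLinearMap = 1) := by
  classical
  have := Fintype.ofFinite ι
  obtain ⟨p, hp⟩ := hpoly
  have flow_p := isPolynomialFlow_of_flow hflow0 hflow hp
  refine ⟨fun x => ?_, fun t x => ?_⟩
  · rw [vectorField_eq_eval_of_flow hflow0 hflow hp, trace_fderiv_eval,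
      flow_p.trace_jacobianMatrix, map_zero]
  · have flow_eq : φ t = fun x i => eval x (atTime t (p i)) := by
      funext x i
      rw [hp, eval_atTime]
    rw [flow_eq, det_fderiv_eval, jacobianMatrix_atTime, ← AlgHom.mapMatrix_apply,
      ← AlgHom.map_det, flow_p.det_spatialJacobian, map_one, map_one]

/-- A smooth vector field on `ℝ^n` whose flow is polynomial in `(t,x)` is divergence-free, and its
flow is volume-preserving: the spatial Jacobian determinant of the flow is identically `1`. -/
theorem stmt8 (n : ℕ) (X : (Fin n → ℝ) → (Fin n → ℝ))
    (hX : ContDiff ℝ (⊤ : ℕ∞) X)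
    (φ : ℝ → (Fin n → ℝ) → (Fin n → ℝ))
    (hflow0 : ∀ x, φ 0 x = x)
    (hflow : ∀ t x, HasDerivAt (fun s => φ s x) (X (φ t x)) t)
    (hpoly : ∃ p : Fin n → MvPolynomial (Fin n ⊕ Unit) ℝ,
      ∀ t x i, φ t x i = MvPolynomial.eval (Sum.elim x fun _ => t) (p i)) :
    (∀ x, LinearMap.trace ℝ (Fin n → ℝ) (fderiv ℝ X x).toLinearMap = 0) ∧
    (∀ t x, LinearMap.det (fderiv ℝ (φ t) x).toLinearMap = 1) :=
  stmt8_general X φ hflow0 hflow hpoly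
end

section
/- Let γ : ℝ → ℝ^n be a polynomial curve of degree at most N. For every ε ∈ (0, 1/(2N)), there exists a decomposition of ℝ into at most N'(N,n,ε) nonoverlapping open intervals I_1,...,I_{N'} (whose closures cover ℝ), with centers b_j ∉ I_j, such that for each j there is an integer k_j with |γ^{(k)}(b_j)(t-b_j)^k / k!| ≤ ε |γ^{(k_j)}(b_j)(t-b_j)^{k_j} / k_j!| for all k ≠ k_j, 0 ≤ k ≤ N, and all t ∈ I_j. In particular |γ(t)| is comparable to |γ^{(k_j)}(b_j)/k_j!| · |t-b_j|^{k_j} on I_j. -/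
/-!
Fix a center `b` and look at the scale `s = |t - b|`. Either one of the monomials `a k * s ^ k`,
with `a k` the size of the `k`-th Taylor coefficient at `b`, dominates the others by the factor
`ε`, or the two largest are comparable, which confines `s` to a window of bounded ratio. The centers
are the real parts of the complex roots of the coordinates, each used for the points `t` which are
closer to it than to any root. There a window is cut into boundedly many pieces whose length is a
small multiple of their distance to the roots, and about an endpoint of such a piece the constant
Taylor term dominates. Since the number of windows and pieces depends only on the degree, the
dimension and `ε`, so does the number of intervals.
-/

section Covering

variable {α β : Type*} {G : Set α → Prop} {K L : ℕ} {S T : Set α}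

/-- `S` is covered by at most `K` sets satisfying `G`; this carries the bound on the number of
intervals, which has to be uniform over all curves. -/
def CoveredBy (G : Set α → Prop) (K : ℕ) (S : Set α) : Prop :=
  ∃ 𝒥 : Finset (Set α), 𝒥.card ≤ K ∧ (∀ J ∈ 𝒥, G J) ∧ ∀ t ∈ S, ∃ J ∈ 𝒥, t ∈ J

namespace CoveredBy

lemma of_self (hS : G S) : CoveredBy G 1 S :=
  ⟨{S}, by simp, by simpa using hS, fun t ht => ⟨S, by simp, ht⟩⟩

lemma empty : CoveredBy G K ∅ :=
  ⟨∅, by simp, by simp, by simp⟩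

lemma subset (h : CoveredBy G K T) (hST : S ⊆ T) : CoveredBy G K S := by
  obtain ⟨𝒥, hcard, hG, hcov⟩ := h
  exact ⟨𝒥, hcard, hG, fun t ht => hcov t (hST ht)⟩

lemma mono {H : Set α → Prop} (h : CoveredBy G K S) (hKL : K ≤ L) (hGH : ∀ J, G J → H J) :
    CoveredBy H L S := by
  obtain ⟨𝒥, hcard, hG, hcov⟩ := h
  exact ⟨𝒥, hcard.trans hKL, fun J hJ => hGH J (hG J hJ), hcov⟩

lemma union (hS : CoveredBy G K S) (hT : CoveredBy G L T) : CoveredBy G (K + L) (S ∪ T) := by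
  classical
  obtain ⟨𝒥, hcard, hG, hcov⟩ := hS
  obtain ⟨𝒥', hcard', hG', hcov'⟩ := hT
  refine ⟨𝒥 ∪ 𝒥', (Finset.card_union_le _ _).trans (add_le_add hcard hcard'), ?_, ?_⟩
  · exact fun J hJ => (Finset.mem_union.1 hJ).elim (hG J) (hG' J)
  · rintro t (ht | ht)
    · exact (hcov t ht).imp fun J hJ => ⟨Finset.mem_union_left _ hJ.1, hJ.2⟩
    · exact (hcov' t ht).imp fun J hJ => ⟨Finset.mem_union_right _ hJ.1, hJ.2⟩

lemma biUnion {ι : Type*} {s : Finset ι} {S : ι → Set α} (h : ∀ i ∈ s, CoveredBy G K (S i)) :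
    CoveredBy G (s.card * K) (⋃ i ∈ s, S i) := by
  classical
  choose! 𝒥 hcard hG hcov using h
  refine ⟨s.biUnion 𝒥, Finset.card_biUnion_le_card_mul _ _ _ hcard, ?_, ?_⟩
  · intro J hJ
    obtain ⟨i, hi, hJ⟩ := Finset.mem_biUnion.1 hJ
    exact hG i hi J hJ
  · intro t ht
    obtain ⟨i, hi, ht⟩ := Set.mem_iUnion₂.1 ht
    exact (hcov i hi t ht).imp fun J hJ => ⟨Finset.mem_biUnion.2 ⟨i, hi, hJ.1⟩, hJ.2⟩

lemma preimage_inter {H : Set β → Prop} (h : CoveredBy G K S) (f : β → α) (C : Set β)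
    (hGH : ∀ J, G J → H (f ⁻¹' J ∩ C)) : CoveredBy H K (f ⁻¹' S ∩ C) := by
  classical
  obtain ⟨𝒥, hcard, hG, hcov⟩ := h
  refine ⟨𝒥.image fun J => f ⁻¹' J ∩ C, Finset.card_image_le.trans hcard, ?_, ?_⟩
  · exact Finset.forall_mem_image.2 fun J hJ => hGH J (hG J hJ)
  · rintro t ⟨htS, htC⟩
    obtain ⟨J, hJ, htJ⟩ := hcov (f t) htS
    exact ⟨_, Finset.mem_image_of_mem _ hJ, htJ, htC⟩

end CoveredBy

end Covering

section Partition

/-- The `I j` are pairwise disjoint open intervals, possibly empty, which decompose `X` up to their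
endpoints. -/
structure IsOpenIntervalPartition {ι X : Type*} [Preorder X] [TopologicalSpace X]
    (I : ι → Set X) : Prop where
  isOpen : ∀ j, IsOpen (I j)
  ordConnected : ∀ j, (I j).OrdConnected
  pairwise_disjoint : Pairwise fun j j' => Disjoint (I j) (I j')
  iUnion_closure : ⋃ j, closure (I j) = Set.univ

section Gap

variable {X : Type*} [LinearOrder X]

/-- The `j`-th of the intervals into which the finite set `F` cuts `X`, counted from the left and
starting at `0`: the points off `F` with exactly `j` elements of `F` below them. -/
def gap (F : Finset X) (j : ℕ) : Set X :=
  {t | t ∉ F ∧ (F.filter (· < t)).card = j}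

lemma ordConnected_gap (F : Finset X) (j : ℕ) : (gap F j).OrdConnected := by
  refine ⟨fun a ⟨_, ha⟩ c ⟨hcF, hc⟩ t ⟨hat, htc⟩ => ?_⟩
  have hsub : F.filter (· < a) ⊆ F.filter (· < t) :=
    Finset.monotone_filter_right F fun x _ hx => hx.trans_le hat
  have hsub' : F.filter (· < t) ⊆ F.filter (· < c) :=
    Finset.monotone_filter_right F fun x _ hx => hx.trans_le htc
  have heq : F.filter (· < t) = F.filter (· < c) :=
    Finset.eq_of_subset_of_card_le hsub' (hc.trans ha.symm ▸ Finset.card_le_card hsub)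
  refine ⟨fun htF => ?_, heq ▸ hc⟩
  have htc' : t < c := htc.lt_of_ne fun h => hcF (h ▸ htF)
  have htt : t ∈ F.filter (· < t) := heq ▸ Finset.mem_filter.2 ⟨htF, htc'⟩
  exact lt_irrefl t (Finset.mem_filter.1 htt).2

lemma isOpen_gap [TopologicalSpace X] [OrderClosedTopology X] (F : Finset X) (j : ℕ) :
    IsOpen (gap F j) := by
  refine isOpen_iff_mem_nhds.2 fun t ⟨htF, ht⟩ => ?_
  have hside : ∀ᶠ y in nhds t, ∀ x ∈ F, x < y ↔ x < t := by
    refine (Filter.eventually_all_finset F).2 fun x hx => ?_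
    rcases lt_or_gt_of_ne (ne_of_mem_of_not_mem hx htF) with hxt | htx
    · filter_upwards [Ioi_mem_nhds hxt] with y hy using iff_of_true hy hxt
    · filter_upwards [Iio_mem_nhds htx] with y hy using iff_of_false hy.not_gt htx.not_gt
  filter_upwards [hside, F.finite_toSet.isClosed.isOpen_compl.mem_nhds htF] with y hy hyF
  exact ⟨hyF, by rw [Finset.filter_congr hy, ht]⟩

lemma isOpenIntervalPartition_gap [TopologicalSpace X] [OrderClosedTopology X] [PerfectSpace X]
    (F : Finset X) : IsOpenIntervalPartition fun j : Fin (F.card + 1) => gap F j where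
  isOpen j := isOpen_gap F j
  ordConnected j := ordConnected_gap F j
  pairwise_disjoint _ _ hne :=
    Set.disjoint_left.2 fun _ ht ht' => hne (Fin.ext (ht.2.symm.trans ht'.2))
  iUnion_closure := by
    have hcover : ⋃ j : Fin (F.card + 1), gap F j = (Set.univ \ F : Set X) := by
      ext t
      simpa [gap, Fin.exists_iff, Nat.lt_succ_iff] using fun _ => Finset.card_filter_le F (· < t)
    rw [← closure_iUnion_of_finite, hcover, (dense_univ.sdiff_finset F).closure_eq]

end Gap

variable {X : Type*} [ConditionallyCompleteLinearOrder X]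

lemma ordConnected_subset_of_sSup_sInf_notMem {I J : Set X} (hI : I.OrdConnected)
    (hJ : J.OrdConnected) (hIJ : (I ∩ J).Nonempty) (hsup : sSup J ∉ I) (hinf : sInf J ∉ I) :
    I ⊆ J := by
  obtain ⟨x, hxI, hxJ⟩ := hIJ
  intro y hy
  by_contra hyJ
  rcases le_total x y with hxy | hyx
  · have hub : y ∈ upperBounds J := fun z hz =>
      not_lt.1 fun hyz => hyJ (hJ.out hxJ hz ⟨hxy, hyz.le⟩)
    exact hsup (hI.out hxI hy ⟨le_csSup ⟨y, hub⟩ hxJ, csSup_le ⟨x, hxJ⟩ hub⟩)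
  · have hlb : y ∈ lowerBounds J := fun z hz =>
      not_lt.1 fun hzy => hyJ (hJ.out hz hxJ ⟨hzy.le, hyx⟩)
    exact hinf (hI.out hy hxI ⟨le_csInf ⟨x, hxJ⟩ hlb, csInf_le ⟨y, hlb⟩ hxJ⟩)

lemma CoveredBy.exists_isOpenIntervalPartition [TopologicalSpace X] [OrderClosedTopology X]
    [PerfectSpace X] [Nonempty X] {G : Set X → Prop} {K : ℕ} {S : Set X} (h : CoveredBy G K S)
    (hS : Dense S) (hG : ∀ J, G J → J.OrdConnected) :
    ∃ m ≤ 2 * K + 1, ∃ I : Fin m → Set X,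
      IsOpenIntervalPartition I ∧ ∀ j, ∃ J, G J ∧ I j ⊆ J := by
  classical
  obtain ⟨𝒥, hcard, h𝒥, hcov⟩ := h
  set F : Finset X := 𝒥.image sSup ∪ 𝒥.image sInf
  have hF : F.card ≤ 2 * K := by
    have hunion : F.card ≤ (𝒥.image sSup).card + (𝒥.image sInf).card :=
      Finset.card_union_le _ _
    have hsup : (𝒥.image sSup).card ≤ 𝒥.card := Finset.card_image_le
    have hinf : (𝒥.image sInf).card ≤ 𝒥.card := Finset.card_image_le
    omega
  refine ⟨F.card + 1, by omega, _, isOpenIntervalPartition_gap F, fun j => ?_⟩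
  rcases (gap F j).eq_empty_or_nonempty with hempty | hne
  · obtain ⟨t, ht⟩ := hS.nonempty
    obtain ⟨J, hJ, -⟩ := hcov t ht
    exact ⟨J, h𝒥 J hJ, by simp only [hempty, Set.empty_subset]⟩
  · obtain ⟨t, htI, htS⟩ := hS.inter_open_nonempty _ (isOpen_gap F j) hne
    obtain ⟨J, hJ, htJ⟩ := hcov t htS
    refine ⟨J, h𝒥 J hJ, ordConnected_subset_of_sSup_sInf_notMem (ordConnected_gap F j)
      (hG J (h𝒥 J hJ)) ⟨t, htI, htJ⟩ (fun hmem => hmem.1 ?_) (fun hmem => hmem.1 ?_)⟩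
    · exact Finset.mem_union_left _ (Finset.mem_image_of_mem _ hJ)
    · exact Finset.mem_union_right _ (Finset.mem_image_of_mem _ hJ)

end Partition

section Roots

open Polynomial

variable {F L : Type*} [NormedField L]

lemma norm_coeff_prod_X_add_C_mul_pow_le {r : ℝ} (hr : 0 ≤ r) (s : Multiset L)
    (hs : ∀ a ∈ s, r ≤ ‖a‖) (k : ℕ) :
    ‖((s.map fun a => X + C a).prod).coeff k‖ * r ^ k ≤ s.card.choose k * ‖s.prod‖ := by
  induction s using Multiset.induction_on generalizing k with
  | empty => rcases k with _ | k <;> simp [coeff_one]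
  | cons a s ih =>
    have ha : r ≤ ‖a‖ := hs a (Multiset.mem_cons_self a s)
    specialize ih fun b hb => hs b (Multiset.mem_cons_of_mem hb)
    simp only [Multiset.map_cons, Multiset.prod_cons, Multiset.card_cons, norm_mul]
    set P := (s.map fun a => X + C a).prod
    rcases k with _ | k
    · have h0 := mul_le_mul_of_nonneg_left (ih 0) (norm_nonneg a)
      simpa [add_mul] using h0
    · have hcoeff : ((X + C a) * P).coeff (k + 1) = P.coeff k + a * P.coeff (k + 1) := by
        rw [add_mul, coeff_add, coeff_X_mul, coeff_C_mul]
      calc ‖((X + C a) * P).coeff (k + 1)‖ * r ^ (k + 1)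
          ≤ (‖P.coeff k‖ + ‖a‖ * ‖P.coeff (k + 1)‖) * r ^ (k + 1) := by
            rw [hcoeff, ← norm_mul]
            gcongr
            exact norm_add_le _ _
        _ = r * (‖P.coeff k‖ * r ^ k) + ‖a‖ * (‖P.coeff (k + 1)‖ * r ^ (k + 1)) := by ring
        _ ≤ ‖a‖ * (s.card.choose k * ‖s.prod‖) + ‖a‖ * (s.card.choose (k + 1) * ‖s.prod‖) := by
            exact add_le_add (mul_le_mul ha (ih k) (by positivity) (norm_nonneg a))
              (mul_le_mul_of_nonneg_left (ih (k + 1)) (norm_nonneg a))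
        _ = (s.card + 1).choose (k + 1) * (‖a‖ * ‖s.prod‖) := by
            rw [Nat.choose_succ_succ]
            push_cast
            ring

lemma taylor_eq_C_mul_prod_X_add_C {P : L[X]} (hP : P.Splits) (x : L) :
    taylor x P =
      C P.leadingCoeff * ((P.roots.map fun w => x - w).map fun a => X + C a).prod := by
  conv_lhs => rw [hP.eq_prod_roots]
  rw [taylor_mul, taylor_C, ← taylorAlgHom_apply, map_multiset_prod, Multiset.map_map,
    Multiset.map_map]
  congr 2
  refine Multiset.map_congr rfl fun w _ => ?_
  simp [taylorAlgHom_apply, add_sub_assoc]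

lemma norm_taylor_coeff_mul_pow_le {P : L[X]} (hP : P.Splits) {r : ℝ} (hr : 0 ≤ r) {x : L}
    (hroots : ∀ w ∈ P.roots, r ≤ ‖x - w‖) (k : ℕ) :
    ‖(taylor x P).coeff k‖ * r ^ k ≤ P.natDegree.choose k * ‖P.eval x‖ := by
  set s := P.roots.map fun w => x - w
  have hs : ∀ a ∈ s, r ≤ ‖a‖ := Multiset.forall_mem_map_iff.2 hroots
  have hcard : s.card = P.natDegree := by rw [Multiset.card_map, ← hP.natDegree_eq_card_roots]
  rw [taylor_eq_C_mul_prod_X_add_C hP, coeff_C_mul, norm_mul, hP.eval_eq_prod_roots, norm_mul,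
    ← hcard, mul_assoc, mul_left_comm (s.card.choose k : ℝ)]
  exact mul_le_mul_of_nonneg_left (norm_coeff_prod_X_add_C_mul_pow_le hr s hs k) (norm_nonneg _)

lemma norm_taylor_coeff_mul_pow_le_of_aroots [NormedField F] [NormedAlgebra F L] [IsAlgClosed L]
    (P : F[X]) {r : ℝ} (hr : 0 ≤ r) {x : F}
    (hroots : ∀ w ∈ P.aroots L, r ≤ ‖algebraMap F L x - w‖) (k : ℕ) :
    ‖(taylor x P).coeff k‖ * r ^ k ≤ P.natDegree.choose k * ‖P.eval x‖ := by
  have h := norm_taylor_coeff_mul_pow_le (IsAlgClosed.splits (P.map (algebraMap F L))) hr hroots k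
  rwa [← map_taylor, coeff_map, eval_map_apply, natDegree_map, norm_algebraMap',
    norm_algebraMap'] at h

end Roots

section Curve

open Polynomial

variable {ι : Type*} {γ : ι → ℝ[X]} {N k κ : ℕ} {ε b t : ℝ}

/-- The `k`-th Taylor coefficient `γ⁽ᵏ⁾(b) / k!` of the curve `γ` at `b`. -/
noncomputable def taylorCoeff (γ : ι → ℝ[X]) (b : ℝ) (k : ℕ) : ι → ℝ :=
  fun i => (taylor b (γ i)).coeff k

lemma eval_eq_sum_taylorCoeff (hγ : ∀ i, (γ i).natDegree ≤ N) (b t : ℝ) :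
    (fun i => eval t (γ i)) = ∑ k ∈ Finset.range (N + 1), (t - b) ^ k • taylorCoeff γ b k := by
  ext i
  have hdeg : (taylor b (γ i)).natDegree < N + 1 := by
    rw [natDegree_taylor]
    exact Nat.lt_succ_of_le (hγ i)
  rw [← taylor_eval_sub b (γ i) t, eval_eq_sum_range' hdeg, Finset.sum_apply]
  exact Finset.sum_congr rfl fun k _ => mul_comm _ _

variable [Fintype ι]

/-- The size at `t`, in the sup norm, of the degree `k` Taylor term of the curve `γ` about `b`. -/
noncomputable def taylorTermNorm (γ : ι → ℝ[X]) (b : ℝ) (k : ℕ) (t : ℝ) : ℝ :=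
  ‖taylorCoeff γ b k‖ * |t - b| ^ k

lemma taylorTermNorm_nonneg (γ : ι → ℝ[X]) (b : ℝ) (k : ℕ) (t : ℝ) :
    0 ≤ taylorTermNorm γ b k t := by
  unfold taylorTermNorm
  positivity

lemma taylorTermNorm_eq (γ : ι → ℝ[X]) (b : ℝ) (k : ℕ) (t : ℝ) :
    taylorTermNorm γ b k t =
      ‖(fun i => eval b (derivative^[k] (γ i)) : ι → ℝ)‖ * |t - b| ^ k / (k.factorial : ℝ) := by
  have hderiv : (fun i => eval b (derivative^[k] (γ i)) : ι → ℝ) =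
      (k.factorial : ℝ) • taylorCoeff γ b k := by
    ext i
    rw [← factorial_smul_hasseDeriv, LinearMap.smul_apply, eval_smul, nsmul_eq_mul,
      ← taylor_coeff, Pi.smul_apply, smul_eq_mul, taylorCoeff]
  rw [hderiv, norm_smul, Real.norm_natCast, taylorTermNorm]
  field_simp

lemma abs_norm_eval_sub_taylorTermNorm_le (hγ : ∀ i, (γ i).natDegree ≤ N) (hκ : κ ≤ N)
    (h : ∀ k ≤ N, k ≠ κ → taylorTermNorm γ b k t ≤ ε * taylorTermNorm γ b κ t) :
    |‖(fun i => eval t (γ i) : ι → ℝ)‖ - taylorTermNorm γ b κ t| ≤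
      N * ε * taylorTermNorm γ b κ t := by
  set v : ℕ → ι → ℝ := fun k => (t - b) ^ k • taylorCoeff γ b k
  have hv : ∀ k, ‖v k‖ = taylorTermNorm γ b k t := fun k => by
    rw [norm_smul, norm_pow, Real.norm_eq_abs, mul_comm, taylorTermNorm]
  have hκ' : κ ∈ Finset.range (N + 1) := Finset.mem_range_succ_iff.2 hκ
  rw [eval_eq_sum_taylorCoeff hγ b t, ← hv κ, ← Finset.add_sum_erase _ v hκ']
  calc |‖v κ + ∑ k ∈ (Finset.range (N + 1)).erase κ, v k‖ - ‖v κ‖|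
      ≤ ‖∑ k ∈ (Finset.range (N + 1)).erase κ, v k‖ := by
        simpa only [add_sub_cancel_left] using abs_norm_sub_norm_le (v κ + _) (v κ)
    _ ≤ ((Finset.range (N + 1)).erase κ).card • (ε * ‖v κ‖) := by
        refine (norm_sum_le _ _).trans (Finset.sum_le_card_nsmul _ _ _ fun k hk => ?_)
        rw [Finset.mem_erase, Finset.mem_range_succ_iff] at hk
        rw [hv, hv]
        exact h k hk.2 hk.1
    _ = N * ε * ‖v κ‖ := by
        rw [Finset.card_erase_of_mem hκ', Finset.card_range, Nat.add_sub_cancel, nsmul_eq_mul,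
          mul_assoc]

lemma norm_taylorCoeff_mul_pow_le (hγ : ∀ i, (γ i).natDegree ≤ N) {r : ℝ} (hr : 0 ≤ r)
    (hroots : ∀ i, ∀ w ∈ (γ i).aroots ℂ, r ≤ ‖(b : ℂ) - w‖) (k : ℕ) :
    ‖taylorCoeff γ b k‖ * r ^ k ≤ 2 ^ N * ‖taylorCoeff γ b 0‖ := by
  have hcoord : ∀ i, ‖taylorCoeff γ b k i * r ^ k‖ ≤ 2 ^ N * ‖taylorCoeff γ b 0‖ := fun i => by
    have hchoose : ((γ i).natDegree.choose k : ℝ) ≤ 2 ^ N := by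
      exact_mod_cast (Nat.choose_le_two_pow _ _).trans (Nat.pow_le_pow_right two_pos (hγ i))
    calc ‖taylorCoeff γ b k i * r ^ k‖ = ‖taylorCoeff γ b k i‖ * r ^ k := by
          rw [norm_mul, Real.norm_of_nonneg (pow_nonneg hr k)]
      _ ≤ (γ i).natDegree.choose k * ‖(γ i).eval b‖ :=
          norm_taylor_coeff_mul_pow_le_of_aroots (γ i) hr (hroots i) k
      _ ≤ 2 ^ N * ‖taylorCoeff γ b 0‖ := by
          rw [← taylor_coeff_zero]
          gcongr
          exact norm_le_pi_norm (taylorCoeff γ b 0) i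
  calc ‖taylorCoeff γ b k‖ * r ^ k = ‖r ^ k • taylorCoeff γ b k‖ := by
        rw [norm_smul, Real.norm_of_nonneg (pow_nonneg hr k), mul_comm]
    _ ≤ 2 ^ N * ‖taylorCoeff γ b 0‖ :=
        (pi_norm_le_iff_of_nonneg (by positivity)).2 fun i => by
          simpa only [Pi.smul_apply, smul_eq_mul, mul_comm] using hcoord i

end Curve

section Scales

variable {a : ℕ → ℝ} {N k l κ : ℕ} {ε q : ℝ}

lemma ordConnected_preimage_mul_sub {S : Set ℝ} (hS : S.OrdConnected) (σ b : ℝ) :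
    ((fun t => σ * (t - b)) ⁻¹' S).OrdConnected := by
  rcases le_total 0 σ with hσ | hσ
  · exact hS.preimage_mono fun x y hxy =>
      mul_le_mul_of_nonneg_left (sub_le_sub_right hxy b) hσ
  · exact hS.preimage_anti fun x y hxy =>
      mul_le_mul_of_nonpos_left (sub_le_sub_right hxy b) hσ

lemma ordConnected_setOf_mul_pow_le_mul_pow {a c : ℝ} (ha : 0 ≤ a) (hc : 0 ≤ c) (k l : ℕ) :
    {s : ℝ | 0 < s ∧ a * s ^ l ≤ c * s ^ k}.OrdConnected := by
  refine ⟨fun x ⟨hx, hxle⟩ z ⟨hz, hzle⟩ y ⟨hxy, hyz⟩ => ⟨hx.trans_le hxy, ?_⟩⟩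
  have hy : 0 < y := hx.trans_le hxy
  rcases le_total l k with hlk | hkl
  · obtain ⟨d, rfl⟩ := Nat.exists_eq_add_of_le hlk
    have hcancel : ∀ s > 0, a * s ^ l ≤ c * s ^ (l + d) ↔ a ≤ c * s ^ d := fun s hs => by
      rw [pow_add, mul_comm (s ^ l), ← mul_assoc, mul_le_mul_iff_left₀ (pow_pos hs l)]
    rw [hcancel y hy]
    exact ((hcancel x hx).1 hxle).trans (by gcongr)
  · obtain ⟨d, rfl⟩ := Nat.exists_eq_add_of_le hkl
    have hcancel : ∀ s > 0, a * s ^ (k + d) ≤ c * s ^ k ↔ a * s ^ d ≤ c := fun s hs => by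
      rw [pow_add, mul_comm (s ^ k), ← mul_assoc, mul_le_mul_iff_left₀ (pow_pos hs k)]
    rw [hcancel y hy]
    exact le_trans (by gcongr) ((hcancel z hz).1 hzle)

/-- The scales `s` at which the monomial `a κ * s ^ κ` dominates, by the factor `ε`, all the other
monomials of degree at most `N`. -/
def dominantScales (a : ℕ → ℝ) (N : ℕ) (ε : ℝ) (κ : ℕ) : Set ℝ :=
  {s | 0 < s ∧ ∀ k ≤ N, k ≠ κ → a k * s ^ k ≤ ε * (a κ * s ^ κ)}

/-- The scales `s` at which the monomial `a l * s ^ l` is at most `a k * s ^ k`, but is not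
dominated by it by the factor `ε`. -/
def comparableScales (a : ℕ → ℝ) (ε : ℝ) (k l : ℕ) : Set ℝ :=
  {s | 0 < s ∧ ε * (a k * s ^ k) < a l * s ^ l ∧ a l * s ^ l ≤ a k * s ^ k}

lemma ordConnected_dominantScales (ha : ∀ k, 0 ≤ a k) (hε : 0 ≤ ε) (N κ : ℕ) :
    (dominantScales a N ε κ).OrdConnected := by
  refine ⟨fun x hx z hz y hy => ⟨hx.1.trans_le hy.1, fun k hk hkκ => ?_⟩⟩
  have hconn := ordConnected_setOf_mul_pow_le_mul_pow (ha k) (mul_nonneg hε (ha κ)) κ k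
  simp only [mul_assoc] at hconn
  exact (hconn.out ⟨hx.1, hx.2 k hk hkκ⟩ ⟨hz.1, hz.2 k hk hkκ⟩ hy).2

lemma Ioi_subset_dominantScales_union_comparableScales (a : ℕ → ℝ) (N : ℕ) (ε : ℝ) :
    Set.Ioi 0 ⊆ (⋃ κ ∈ Finset.range (N + 1), dominantScales a N ε κ) ∪
      ⋃ p ∈ (Finset.range (N + 1)).offDiag, comparableScales a ε p.1 p.2 := by
  intro s hs
  obtain ⟨κ, hκ, hmax⟩ := (Finset.range (N + 1)).exists_max_image (fun k => a k * s ^ k)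
    Finset.nonempty_range_add_one
  by_cases hdom : s ∈ dominantScales a N ε κ
  · exact Or.inl (Set.mem_iUnion₂.2 ⟨κ, hκ, hdom⟩)
  · obtain ⟨l, hl, hlκ, hlt⟩ : ∃ l ≤ N, l ≠ κ ∧ ε * (a κ * s ^ κ) < a l * s ^ l := by
      by_contra! h
      exact hdom ⟨hs, h⟩
    have hl' : l ∈ Finset.range (N + 1) := Finset.mem_range_succ_iff.2 hl
    exact Or.inr (Set.mem_iUnion₂.2
      ⟨(κ, l), Finset.mem_offDiag.2 ⟨hκ, hl', hlκ.symm⟩, hs, hlt, hmax l hl'⟩)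

lemma mul_le_of_mul_pow_mul_pow_lt {s s₀ : ℝ} (hkl : k ≠ l) (hε : 0 < ε) (hε1 : ε ≤ 1)
    (hs : 0 < s) (hs₀ : 0 < s₀) (h : ε * (s ^ k * s₀ ^ l) < s₀ ^ k * s ^ l)
    (h' : ε * (s₀ ^ k * s ^ l) < s ^ k * s₀ ^ l) : ε * s ≤ s₀ := by
  wlog hlt : k < l generalizing k l
  · exact this hkl.symm (by simpa only [mul_comm] using h') (by simpa only [mul_comm] using h)
      (hkl.lt_or_gt.resolve_left hlt)
  obtain ⟨d, rfl⟩ := Nat.exists_eq_add_of_lt hlt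
  have hratio : ε * s ^ (d + 1) < s₀ ^ (d + 1) := by
    refine lt_of_mul_lt_mul_right (a := s₀ ^ k * s ^ k) ?_ (by positivity)
    calc _ = ε * (s₀ ^ k * s ^ (k + d + 1)) := by ring
      _ < s ^ k * s₀ ^ (k + d + 1) := h'
      _ = _ := by ring
  refine (lt_of_pow_lt_pow_left₀ (d + 1) hs₀.le ?_).le
  calc (ε * s) ^ (d + 1) = ε ^ (d + 1) * s ^ (d + 1) := mul_pow _ _ _
    _ ≤ ε * s ^ (d + 1) := by
        gcongr
        exact pow_le_of_le_one hε.le hε1 d.succ_ne_zero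
    _ < s₀ ^ (d + 1) := hratio

lemma mul_pos_of_mem_comparableScales {s : ℝ} (hε : 0 ≤ ε) (ha : ∀ k, 0 ≤ a k)
    (hs : s ∈ comparableScales a ε k l) : 0 < a k * a l := by
  obtain ⟨hs, hlt, hle⟩ := hs
  have hl : 0 < a l * s ^ l :=
    (mul_nonneg hε (mul_nonneg (ha k) (pow_nonneg hs.le k))).trans_lt hlt
  exact mul_pos (pos_of_mul_pos_left (hl.trans_le hle) (pow_nonneg hs.le k))
    (pos_of_mul_pos_left hl (pow_nonneg hs.le l))

lemma mul_pow_mul_pow_lt_of_mem_comparableScales {s s₀ : ℝ} (hε : 0 ≤ ε) (ha : ∀ k, 0 ≤ a k)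
    (hs : s ∈ comparableScales a ε k l) (hs₀ : s₀ ∈ comparableScales a ε k l) :
    ε * (s ^ k * s₀ ^ l) < s₀ ^ k * s ^ l := by
  have hpos := mul_pos_of_mem_comparableScales hε ha hs
  have hal : 0 < a l := pos_of_mul_pos_right hpos (ha k)
  obtain ⟨hs, hlt, -⟩ := hs
  obtain ⟨hs₀, -, hle₀⟩ := hs₀
  refine lt_of_mul_lt_mul_right (a := a k * a l) ?_ hpos.le
  calc ε * (s ^ k * s₀ ^ l) * (a k * a l) = ε * (a k * s ^ k) * (a l * s₀ ^ l) := by ring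
    _ < a l * s ^ l * (a l * s₀ ^ l) := by gcongr
    _ ≤ a l * s ^ l * (a k * s₀ ^ k) := by gcongr
    _ = s₀ ^ k * s ^ l * (a k * a l) := by ring

lemma mul_le_of_mem_comparableScales {s s₀ : ℝ} (hkl : k ≠ l) (hε : 0 < ε) (hε1 : ε ≤ 1)
    (ha : ∀ k, 0 ≤ a k) (hs : s ∈ comparableScales a ε k l)
    (hs₀ : s₀ ∈ comparableScales a ε k l) : ε * s ≤ s₀ :=
  mul_le_of_mul_pow_mul_pow_lt hkl hε hε1 hs.1 hs₀.1
    (mul_pow_mul_pow_lt_of_mem_comparableScales hε.le ha hs hs₀)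
    (mul_pow_mul_pow_lt_of_mem_comparableScales hε.le ha hs₀ hs)

/-- An interval of scales on which one of the monomials `a k * s ^ k` dominates by the factor `ε`,
or whose elements differ by a ratio less than `q`. -/
def IsScaleBlock (a : ℕ → ℝ) (N : ℕ) (ε q : ℝ) (S : Set ℝ) : Prop :=
  S.OrdConnected ∧
    ((∃ κ ≤ N, S ⊆ dominantScales a N ε κ) ∨ ∃ u > 0, S ⊆ Set.Ico u (q * u))

lemma coveredBy_isScaleBlock_Ico (a : ℕ → ℝ) (N : ℕ) (ε : ℝ) (hq : 0 < q) {x : ℝ} (hx : 0 < x)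
    (M : ℕ) : CoveredBy (IsScaleBlock a N ε q) M (Set.Ico x (q ^ M * x)) := by
  induction M with
  | zero => simpa using CoveredBy.empty
  | succ M ih =>
    have hpos : 0 < q ^ M * x := mul_pos (pow_pos hq M) hx
    have hblock : IsScaleBlock a N ε q (Set.Ico (q ^ M * x) (q * (q ^ M * x))) :=
      ⟨Set.ordConnected_Ico, Or.inr ⟨_, hpos, subset_rfl⟩⟩
    refine (ih.union (.of_self hblock)).subset fun s ⟨hxs, hs⟩ => ?_
    rw [pow_succ', mul_assoc] at hs
    exact (lt_or_ge s (q ^ M * x)).imp (fun h => ⟨hxs, h⟩) fun h => ⟨h, hs⟩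

lemma coveredBy_isScaleBlock_comparableScales (N : ℕ) (hkl : k ≠ l) (hε : 0 < ε) (hε1 : ε ≤ 1)
    (ha : ∀ k, 0 ≤ a k) (hq : 0 < q) {M : ℕ} (hM : 1 / ε ^ 2 < q ^ M) :
    CoveredBy (IsScaleBlock a N ε q) M (comparableScales a ε k l) := by
  rcases (comparableScales a ε k l).eq_empty_or_nonempty with hempty | ⟨s₀, hs₀⟩
  · exact hempty ▸ .empty
  have hpos : 0 < ε * s₀ := mul_pos hε hs₀.1
  refine (coveredBy_isScaleBlock_Ico a N ε hq hpos M).subset fun s hs =>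
    ⟨mul_le_of_mem_comparableScales hkl hε hε1 ha hs₀ hs, ?_⟩
  calc s ≤ s₀ / ε := by
        rw [le_div_iff₀' hε]
        exact mul_le_of_mem_comparableScales hkl hε hε1 ha hs hs₀
    _ = 1 / ε ^ 2 * (ε * s₀) := by field_simp
    _ < q ^ M * (ε * s₀) := by gcongr

lemma exists_forall_coveredBy_isScaleBlock (N : ℕ) (hε : 0 < ε) (hε1 : ε ≤ 1) (hq : 1 < q) :
    ∃ K, ∀ a : ℕ → ℝ, (∀ k, 0 ≤ a k) → CoveredBy (IsScaleBlock a N ε q) K (Set.Ioi 0) := by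
  obtain ⟨M, hM⟩ := pow_unbounded_of_one_lt (1 / ε ^ 2) hq
  refine ⟨(Finset.range (N + 1)).card * 1 + (Finset.range (N + 1)).offDiag.card * M,
    fun a ha => ?_⟩
  have hdom : CoveredBy (IsScaleBlock a N ε q) ((Finset.range (N + 1)).card * 1)
      (⋃ κ ∈ Finset.range (N + 1), dominantScales a N ε κ) :=
    .biUnion fun κ hκ => .of_self ⟨ordConnected_dominantScales ha hε.le N κ,
      Or.inl ⟨κ, Finset.mem_range_succ_iff.1 hκ, subset_rfl⟩⟩
  have hcomp : CoveredBy (IsScaleBlock a N ε q) ((Finset.range (N + 1)).offDiag.card * M)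
      (⋃ p ∈ (Finset.range (N + 1)).offDiag, comparableScales a ε p.1 p.2) :=
    .biUnion fun p hp => coveredBy_isScaleBlock_comparableScales N
      (Finset.mem_offDiag.1 hp).2.2 hε hε1 ha (one_pos.trans hq) hM
  exact (hdom.union hcomp).subset (Ioi_subset_dominantScales_union_comparableScales a N ε)

end Scales

section DominantTerm

open Polynomial

variable {ι : Type*} {γ : ι → ℝ[X]} {N : ℕ} {ε b : ℝ}

/-- The real points that are at least as close to `b` as to every complex root of every coordinate
of `γ`; when `b` is the real part of a root, this contains the trace on `ℝ` of the Voronoi cell of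
that root. Coordinates that vanish identically impose no condition. -/
def rootCell (γ : ι → ℝ[X]) (b : ℝ) : Set ℝ :=
  {t | ∀ i, ∀ w ∈ (γ i).aroots ℂ, |t - b| ≤ ‖(t : ℂ) - w‖}

lemma abs_sub_le_norm_sub_iff (t b : ℝ) (w : ℂ) :
    |t - b| ≤ ‖(t : ℂ) - w‖ ↔ (w.re - b) * (t - b) ≤ ‖w - b‖ ^ 2 / 2 := by
  rw [← sq_le_sq₀ (abs_nonneg _) (norm_nonneg _), sq_abs, Complex.sq_norm, Complex.sq_norm,
    Complex.normSq_apply, Complex.normSq_apply]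
  simp only [Complex.sub_re, Complex.sub_im, Complex.ofReal_re, Complex.ofReal_im]
  constructor <;> intro h <;> linarith

lemma ordConnected_rootCell (γ : ι → ℝ[X]) (b : ℝ) : (rootCell γ b).OrdConnected := by
  simp only [rootCell, Set.ofPred_forall, abs_sub_le_norm_sub_iff]
  exact Set.ordConnected_iInter fun i => Set.ordConnected_biInter fun w _ =>
    ordConnected_preimage_mul_sub Set.ordConnected_Iic (w.re - b) b

lemma sub_le_norm_sub_of_mem_rootCell {t : ℝ} (ht : t ∈ rootCell γ b) {i : ι} {w : ℂ}
    (hw : w ∈ (γ i).aroots ℂ) (c : ℝ) : |t - b| - |t - c| ≤ ‖(c : ℂ) - w‖ :=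
  calc |t - b| - |t - c| ≤ ‖(t : ℂ) - w‖ - ‖(t : ℂ) - c‖ := by
        rw [← Complex.ofReal_sub, Complex.norm_real, Real.norm_eq_abs]
        exact sub_le_sub_right (ht i w hw) _
    _ ≤ ‖(c : ℂ) - w‖ := by
        simpa only [sub_sub_sub_cancel_left] using
          norm_sub_norm_le ((t : ℂ) - w) ((t : ℂ) - c)

variable [Fintype ι]

lemma exists_finset_forall_exists_mem_rootCell (hγ : ∀ i, (γ i).natDegree ≤ N) :
    ∃ Z : Finset ℝ, Z.card ≤ Fintype.card ι * N + 1 ∧ ∀ t, ∃ b ∈ Z, t ∈ rootCell γ b := by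
  classical
  -- The additional point `0` only serves to make `W` nonempty when there are no roots.
  set W : Finset ℂ := insert 0 (Finset.univ.biUnion fun i => ((γ i).aroots ℂ).toFinset)
  have hW : W.card ≤ Fintype.card ι * N + 1 :=
    (Finset.card_insert_le _ _).trans <| Nat.succ_le_succ <|
      Finset.card_biUnion_le_card_mul _ _ N fun i _ => (Multiset.toFinset_card_le _).trans <|
        (card_roots' _).trans (natDegree_map_le.trans (hγ i))
  refine ⟨W.image Complex.re, Finset.card_image_le.trans hW, fun t => ?_⟩
  obtain ⟨z, hz, hmin⟩ := W.exists_min_image (fun z => ‖(t : ℂ) - z‖) (Finset.insert_nonempty _ _)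
  refine ⟨z.re, Finset.mem_image_of_mem _ hz, fun i w hw => ?_⟩
  have hwW : w ∈ W := Finset.mem_insert_of_mem
    (Finset.mem_biUnion.2 ⟨i, Finset.mem_univ i, Multiset.mem_toFinset.2 hw⟩)
  calc |t - z.re| = |((t : ℂ) - z).re| := by rw [Complex.sub_re, Complex.ofReal_re]
    _ ≤ ‖(t : ℂ) - z‖ := Complex.abs_re_le_norm _
    _ ≤ ‖(t : ℂ) - w‖ := hmin w hwW

/-- On `J` one Taylor term of `γ` of order at most `N`, about some center outside `J`, dominates
all the others by the factor `ε`. -/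
def HasDominantTerm (γ : ι → ℝ[X]) (N : ℕ) (ε : ℝ) (J : Set ℝ) : Prop :=
  ∃ b ∉ J, ∃ κ ≤ N, ∀ t ∈ J, ∀ k ≤ N, k ≠ κ →
    taylorTermNorm γ b k t ≤ ε * taylorTermNorm γ b κ t

lemma HasDominantTerm.mono {I J : Set ℝ} {ε' : ℝ} (hJ : HasDominantTerm γ N ε J) (hIJ : I ⊆ J)
    (hε : ε ≤ ε') : HasDominantTerm γ N ε' I := by
  obtain ⟨b, hb, κ, hκ, hdom⟩ := hJ
  refine ⟨b, fun hbI => hb (hIJ hbI), κ, hκ, fun t ht k hk hkκ => ?_⟩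
  exact (hdom t (hIJ ht) k hk hkκ).trans
    (mul_le_mul_of_nonneg_right hε (taylorTermNorm_nonneg γ b κ t))

lemma hasDominantTerm_of_le_norm_sub_aroots (hγ : ∀ i, (γ i).natDegree ≤ N) (hε : 0 ≤ ε)
    (hε1 : ε ≤ 1) {r : ℝ} (hr : 0 ≤ r) {J : Set ℝ} (hbJ : b ∉ J)
    (hroots : ∀ i, ∀ w ∈ (γ i).aroots ℂ, r ≤ ‖(b : ℂ) - w‖)
    (hJ : ∀ t ∈ J, |t - b| ≤ ε / 2 ^ N * r) : HasDominantTerm γ N ε J := by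
  refine ⟨b, hbJ, 0, N.zero_le, fun t ht k _ hk => ?_⟩
  have hδ1 : ε / 2 ^ N ≤ 1 :=
    div_le_one_of_le₀ (hε1.trans (one_le_pow₀ one_le_two)) (by positivity)
  calc taylorTermNorm γ b k t ≤ ‖taylorCoeff γ b k‖ * (ε / 2 ^ N * r) ^ k := by
        unfold taylorTermNorm
        gcongr
        exact hJ t ht
    _ = (ε / 2 ^ N) ^ k * (‖taylorCoeff γ b k‖ * r ^ k) := by ring
    _ ≤ ε / 2 ^ N * (2 ^ N * ‖taylorCoeff γ b 0‖) :=
        mul_le_mul (pow_le_of_le_one (by positivity) hδ1 hk)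
          (norm_taylorCoeff_mul_pow_le hγ hr hroots k) (by positivity) (by positivity)
    _ = ε * taylorTermNorm γ b 0 t := by
        rw [taylorTermNorm, pow_zero, mul_one]
        field_simp

lemma hasDominantTerm_preimage_Ico (hγ : ∀ i, (γ i).natDegree ≤ N) (hε : 0 < ε) (hε1 : ε ≤ 1)
    {σ u : ℝ} (hσ : |σ| = 1) (hu : 0 < u) :
    HasDominantTerm γ N ε
      ((fun t => σ * (t - b)) ⁻¹' Set.Ico u ((1 + ε / 2 ^ (N + 1)) * u) ∩ rootCell γ b) := by
  set δ := ε / 2 ^ (N + 1) with hδ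
  set J := (fun t => σ * (t - b)) ⁻¹' Set.Ico u ((1 + δ) * u) ∩ rootCell γ b
  set c := b + σ * ((1 + δ) * u) with hc
  have hσσ : σ * σ = 1 := by rw [← abs_mul_abs_self, hσ, one_mul]
  have hcenter : σ * (c - b) = (1 + δ) * u := by
    rw [hc, add_sub_cancel_left, ← mul_assoc, hσσ, one_mul]
  have habs : ∀ x, |σ * x| = |x| := fun x => by rw [abs_mul, hσ, one_mul]
  have hdist : ∀ t ∈ J, |t - c| ≤ δ * u := fun t ⟨⟨hut, htu⟩, _⟩ => by
    rw [← habs, ← sub_sub_sub_cancel_right t c b, mul_sub, hcenter, abs_le]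
    constructor <;> linarith
  have hδu : δ * u ≤ u / 2 := by
    have hpow : (1 : ℝ) ≤ 2 ^ N := one_le_pow₀ one_le_two
    rw [hδ, pow_succ, div_mul_eq_mul_div, div_le_div_iff₀ (by positivity) two_pos]
    nlinarith
  rcases J.eq_empty_or_nonempty with hJ | ⟨t₀, ht₀⟩
  · exact ⟨b, by simp [hJ], 0, N.zero_le, by simp [hJ]⟩
  refine hasDominantTerm_of_le_norm_sub_aroots hγ hε.le hε1 (half_pos hu).le
    (fun hcJ => (hcenter ▸ hcJ.1.2).false) (fun i w hw => ?_) fun t ht => ?_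
  · calc u / 2 ≤ |t₀ - b| - |t₀ - c| := by
          have hut₀ : u ≤ |t₀ - b| := habs (t₀ - b) ▸ ht₀.1.1.trans (le_abs_self _)
          linarith [hdist t₀ ht₀]
      _ ≤ ‖(c : ℂ) - w‖ := sub_le_norm_sub_of_mem_rootCell ht₀.2 hw c
  · calc |t - c| ≤ δ * u := hdist t ht
      _ = ε / 2 ^ N * (u / 2) := by rw [hδ]; ring

lemma IsScaleBlock.hasDominantTerm (hγ : ∀ i, (γ i).natDegree ≤ N) (hε : 0 < ε) (hε1 : ε ≤ 1)
    {σ : ℝ} (hσ : |σ| = 1) {S : Set ℝ}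
    (hS : IsScaleBlock (fun k => ‖taylorCoeff γ b k‖) N ε (1 + ε / 2 ^ (N + 1)) S) :
    HasDominantTerm γ N ε ((fun t => σ * (t - b)) ⁻¹' S ∩ rootCell γ b) := by
  obtain ⟨-, ⟨κ, hκ, hdom⟩ | ⟨u, hu, hsub⟩⟩ := hS
  · refine ⟨b, fun hb => ?_, κ, hκ, fun t ht k hk hkκ => ?_⟩
    · simpa using (hdom hb.1).1
    · have hpos : 0 < σ * (t - b) := (hdom ht.1).1
      have hle := (hdom ht.1).2 k hk hkκ
      have habs : |t - b| = σ * (t - b) := by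
        rw [← abs_of_pos hpos, abs_mul, hσ, one_mul]
      simpa only [taylorTermNorm, habs] using hle
  · exact (hasDominantTerm_preimage_Ico hγ hε hε1 hσ hu).mono
      (Set.inter_subset_inter_left _ (Set.preimage_mono hsub)) le_rfl

lemma exists_forall_dense_coveredBy_hasDominantTerm (ι : Type*) [Fintype ι] (N : ℕ)
    (hε : 0 < ε) :
    ∃ K, ∀ γ : ι → ℝ[X], (∀ i, (γ i).natDegree ≤ N) → ∃ S, Dense S ∧
      CoveredBy (fun J => J.OrdConnected ∧ HasDominantTerm γ N ε J) K S := by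
  wlog hε1 : ε ≤ 1 generalizing ε
  · obtain ⟨K, hK⟩ := this one_pos le_rfl
    refine ⟨K, fun γ hγ => (hK γ hγ).imp fun S hS => ⟨hS.1, hS.2.mono le_rfl fun J hJ => ?_⟩⟩
    exact ⟨hJ.1, hJ.2.mono subset_rfl (not_le.1 hε1).le⟩
  obtain ⟨K, hK⟩ := exists_forall_coveredBy_isScaleBlock N hε hε1
    (lt_add_of_pos_right 1 (by positivity : 0 < ε / 2 ^ (N + 1)))
  refine ⟨(Fintype.card ι * N + 1) * 2 * K, fun γ hγ => ?_⟩
  obtain ⟨Z, hZ, hcell⟩ := exists_finset_forall_exists_mem_rootCell hγ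
  have hcov := CoveredBy.biUnion (s := Z ×ˢ ({1, -1} : Finset ℝ)) fun p hp =>
    (hK _ fun k => norm_nonneg (taylorCoeff γ p.1 k)).preimage_inter (fun t => p.2 * (t - p.1))
      (rootCell γ p.1) (H := fun J => J.OrdConnected ∧ HasDominantTerm γ N ε J) fun S hS => by
        have hσ : |p.2| = 1 := by
          obtain h | h : p.2 = 1 ∨ p.2 = -1 := by simpa using (Finset.mem_product.1 hp).2
          all_goals simp [h]
        exact ⟨(ordConnected_preimage_mul_sub hS.1 _ _).inter (ordConnected_rootCell γ p.1),
          hS.hasDominantTerm hγ hε hε1 hσ⟩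
  refine ⟨Set.univ \ Z, dense_univ.sdiff_finset Z, (hcov.mono ?_ fun _ => id).subset ?_⟩
  · rw [Finset.card_product]
    gcongr
    exact Finset.card_le_two
  · rintro t ⟨-, htZ⟩
    obtain ⟨b, hb, htb⟩ := hcell t
    rcases lt_or_gt_of_ne (ne_of_mem_of_not_mem hb htZ) with hbt | htb'
    · exact Set.mem_iUnion₂.2 ⟨(b, 1), by simpa using hb, by simpa using hbt, htb⟩
    · exact Set.mem_iUnion₂.2 ⟨(b, -1), by simpa using hb, by simpa using htb', htb⟩

lemma half_mul_le_and_le_three_halves_mul {x y δ : ℝ} (hy : 0 ≤ y) (hδ : δ ≤ 1 / 2)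
    (h : |x - y| ≤ δ * y) : 1 / 2 * y ≤ x ∧ x ≤ 3 / 2 * y := by
  have hxy : |x - y| ≤ 1 / 2 * y := h.trans (mul_le_mul_of_nonneg_right hδ hy)
  constructor <;> linarith [abs_le.1 hxy]

theorem stmt11_general (ι : Type*) [Fintype ι] (N : ℕ) {ε : ℝ} (hε : 0 < ε) :
    ∃ N' : ℕ, ∀ γ : ι → ℝ[X], (∀ i, (γ i).natDegree ≤ N) →
      ∃ m ≤ N', ∃ (I : Fin m → Set ℝ) (b : Fin m → ℝ) (κ : Fin m → ℕ),
        IsOpenIntervalPartition I ∧ (∀ j, b j ∉ I j) ∧ (∀ j, κ j ≤ N) ∧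
        (∀ j, ∀ t ∈ I j, ∀ k ≤ N, k ≠ κ j →
          taylorTermNorm γ (b j) k t ≤ ε * taylorTermNorm γ (b j) (κ j) t) ∧
        ∀ j, ∀ t ∈ I j,
          |‖(fun i => eval t (γ i) : ι → ℝ)‖ - taylorTermNorm γ (b j) (κ j) t| ≤
            N * ε * taylorTermNorm γ (b j) (κ j) t := by
  obtain ⟨K, hK⟩ := exists_forall_dense_coveredBy_hasDominantTerm ι N hε
  refine ⟨2 * K + 1, fun γ hγ => ?_⟩
  obtain ⟨S, hS, hcov⟩ := hK γ hγ
  obtain ⟨m, hm, I, hI, hsub⟩ := hcov.exists_isOpenIntervalPartition hS fun J hJ => hJ.1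
  have hdom : ∀ j, HasDominantTerm γ N ε (I j) := fun j =>
    have ⟨_, hJ, hIJ⟩ := hsub j
    hJ.2.mono hIJ le_rfl
  choose b hb κ hκ hdom using hdom
  exact ⟨m, hm, I, b, κ, hI, hb, hκ, hdom, fun j t ht =>
    abs_norm_eval_sub_taylorTermNorm_le hγ (hκ j) (hdom j t ht)⟩

end DominantTerm

/-- Monomial approximation of a polynomial curve: `ℝ` decomposes into boundedly many nonoverlapping
open intervals on each of which a single Taylor term of `γ` about a center `b_j ∉ I_j` dominates
all others by the factor `ε`; in particular `|γ(t)|` is comparable to that term on `I_j`. -/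
theorem stmt11 (n N : ℕ) (hN : 0 < N) (ε : ℝ) (hε : 0 < ε) (hε' : ε < 1 / (2 * N)) :
    ∃ N' : ℕ, ∀ γ : Fin n → Polynomial ℝ, (∀ i, (γ i).natDegree ≤ N) →
      ∃ (m : ℕ) (I : Fin m → Set ℝ) (b : Fin m → ℝ) (κ : Fin m → ℕ),
        m ≤ N' ∧
        (∀ j, IsOpen (I j)) ∧
        (∀ j, (I j).OrdConnected) ∧
        (Pairwise fun j j' => Disjoint (I j) (I j')) ∧
        (⋃ j, closure (I j)) = Set.univ ∧
        (∀ j, b j ∉ I j) ∧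
        (∀ j, κ j ≤ N) ∧
        (∀ j, ∀ t ∈ I j, ∀ k ≤ N, k ≠ κ j →
          ‖(fun i => Polynomial.eval (b j) (Polynomial.derivative^[k] (γ i)) : Fin n → ℝ)‖ *
              |t - b j| ^ k / (k.factorial : ℝ) ≤
            ε * (‖(fun i => Polynomial.eval (b j) (Polynomial.derivative^[κ j] (γ i)) :
                  Fin n → ℝ)‖ * |t - b j| ^ (κ j) / ((κ j).factorial : ℝ))) ∧
        (∀ j, ∀ t ∈ I j,
          (1 / 2) * (‖(fun i => Polynomial.eval (b j) (Polynomial.derivative^[κ j] (γ i)) :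
                Fin n → ℝ)‖ * |t - b j| ^ (κ j) / ((κ j).factorial : ℝ)) ≤
              ‖(fun i => Polynomial.eval t (γ i) : Fin n → ℝ)‖ ∧
            ‖(fun i => Polynomial.eval t (γ i) : Fin n → ℝ)‖ ≤
              (3 / 2) * (‖(fun i => Polynomial.eval (b j)
                  (Polynomial.derivative^[κ j] (γ i)) : Fin n → ℝ)‖ *
                |t - b j| ^ (κ j) / ((κ j).factorial : ℝ))) := by
  obtain ⟨N', h⟩ := stmt11_general (Fin n) N hε
  refine ⟨N', fun γ hγ => ?_⟩
  obtain ⟨m, hm, I, b, κ, hI, hb, hκ, hdom, hcomp⟩ := h γ hγ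
  have hNε : N * ε ≤ 1 / 2 := by
    rw [lt_div_iff₀ (by positivity)] at hε'
    linarith
  simp only [← taylorTermNorm_eq]
  exact ⟨m, I, b, κ, hm, hI.isOpen, hI.ordConnected, hI.pairwise_disjoint, hI.iUnion_closure, hb,
    hκ, hdom, fun j t ht =>
      half_mul_le_and_le_three_halves_mul (taylorTermNorm_nonneg _ _ _ _) hNε (hcomp j t ht)⟩
end

section
/- Let P : ℝ^n → ℝ^n and γ : ℝ → ℝ^n be polynomials of degree at most N, let T = {(x', x_n) ∈ ℝ^n : |x'| < 1} be the unit cylinder, and assume det DP is nonvanishing on the closure of T. Then the preimage γ^{-1}(P(T)) ⊆ ℝ is a union of at most C(n,N) intervals. -/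
/-!
The coefficients of `P` and `γ` are treated as generic: they are functions on the set of all
admissible pairs `(P, γ)`, so they lie in one ring `K`, of which each pair is a real point
`K →+* ℝ`. Eliminating `x ∈ T` from the equation `P x = γ t` over `K` leaves a condition on `t`
that depends only on the signs of finitely many members of `K[X]`. Each pair specializes these to
real polynomials with boundedly many zeros, which cut the line into boundedly many intervals.

The elimination is the Tarski–Seidenberg theorem, proved by the Cohen–Hörmander method. Suppose
that two specializations of a family containing `p'` have the same signs along the line after a
reparametrization. The remainders of `p` modulo the family give the signs of `p` at the zeros of
the family; near `±∞` the sign of `p` is that of `±p'`; and `p` is monotone between consecutive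
zeros of `p'`, so a further reparametrization that fixes the zeros of the family makes the signs
of `p` agree as well.
-/

open Polynomial
open SignType (sign)

section OrderIso

theorem exists_orderIso_apply_eq_of_le {l r a b : ℝ} (hla : l < a) (hab : a ≤ b) (hbr : b < r) :
    ∃ ψ : ℝ ≃o ℝ, (∀ t ∉ Set.Ioo l r, ψ t = t) ∧ ψ a = b := by
  have hal : 0 < a - l := sub_pos.2 hla
  have hra : 0 < r - a := sub_pos.2 (hab.trans_lt hbr)
  obtain ⟨k, hk, hkb⟩ : ∃ k, 1 ≤ k ∧ l + k * (a - l) = b :=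
    ⟨(b - l) / (a - l), by rw [one_le_div hal]; linarith, by field_simp; ring⟩
  obtain ⟨m, hm0, hm1, hmb⟩ : ∃ m, 0 < m ∧ m ≤ 1 ∧ r - m * (r - a) = b :=
    ⟨(r - b) / (r - a), div_pos (sub_pos.2 hbr) hra, by rw [div_le_one hra]; linarith,
      by field_simp; ring⟩
  let f : ℝ → ℝ := fun t => max t (min (l + k * (t - l)) (r - m * (r - t)))
  have hfix : ∀ t ∉ Set.Ioo l r, f t = t := by
    intro t ht
    refine max_eq_left ?_
    rcases le_or_gt t l with htl | htl
    · exact min_le_of_left_le (by nlinarith)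
    · have hrt : r ≤ t := not_lt.1 fun h => ht ⟨htl, h⟩
      exact min_le_of_right_le (by nlinarith)
  have hmono : StrictMono f := fun s t hst =>
    max_lt_max hst (min_lt_min (by nlinarith) (by nlinarith))
  have hcont : Continuous f := by fun_prop
  have hsurj : f.Surjective := hcont.surjective
    (Filter.tendsto_atTop_mono (fun t => le_max_left _ _) Filter.tendsto_id)
    (Filter.tendsto_id.congr' <| (Filter.eventually_le_atBot l).mono fun t ht =>
      (hfix t fun h => h.1.not_ge ht).symm)
  refine ⟨hmono.orderIsoOfSurjective f hsurj, hfix, ?_⟩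
  change max a (min (l + k * (a - l)) (r - m * (r - a))) = b
  rw [hkb, hmb, min_self, max_eq_right hab]

theorem exists_orderIso_apply_eq {l r a b : ℝ} (ha : a ∈ Set.Ioo l r) (hb : b ∈ Set.Ioo l r) :
    ∃ ψ : ℝ ≃o ℝ, (∀ t ∉ Set.Ioo l r, ψ t = t) ∧ ψ a = b := by
  rcases le_total a b with hab | hba
  · exact exists_orderIso_apply_eq_of_le ha.1 hab hb.2
  · obtain ⟨ψ, hfix, hψ⟩ := exists_orderIso_apply_eq_of_le hb.1 hba ha.2
    exact ⟨ψ.symm, fun t ht => by rw [ψ.symm_apply_eq, hfix t ht],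
      by rw [← hψ, ψ.symm_apply_apply]⟩

theorem exists_orderIso_eq_of_le_of_eq_of_ge {α : Type*} [Preorder α] {ψ₀ ψ₁ : α ≃o α} {l : α}
    (h₀ : ∀ t, l ≤ t → ψ₀ t = t) (h₁ : ∀ t ≤ l, ψ₁ t = t) :
    ∃ ψ : α ≃o α, (∀ t ≤ l, ψ t = ψ₀ t) ∧ ∀ t, l ≤ t → ψ t = ψ₁ t :=
  ⟨ψ₁.trans ψ₀, fun t ht => congrArg ψ₀ (h₁ t ht),
    fun _ ht => h₀ _ ((h₁ l le_rfl).ge.trans (ψ₁.monotone ht))⟩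

theorem exists_orderIso_of_forall_gap {α : Type*} [LinearOrder α] {R : α → α → Prop}
    (W : Finset α)
    (hgap : ∀ l ∈ W, ∀ r ∈ W, l < r → (∀ w ∈ W, w ∉ Set.Ioo l r) →
      ∃ ψ : α ≃o α, (∀ t ∉ Set.Ioo l r, ψ t = t) ∧ ∀ t ∈ Set.Ioo l r, R t (ψ t)) :
    ∃ ψ : α ≃o α, (∀ t, (t ∈ W ∨ ∀ l ∈ W, ∀ r ∈ W, t ∉ Set.Ioo l r) → ψ t = t) ∧
      ∀ l ∈ W, ∀ r ∈ W, ∀ t ∈ Set.Ioo l r, t ∉ W → R t (ψ t) := by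
  induction W using Finset.induction_on_max with
  | empty => exact ⟨OrderIso.refl α, by simp⟩
  | insert m W hm ih =>
    rcases W.eq_empty_or_nonempty with rfl | hW
    · exact ⟨OrderIso.refl α, fun _ _ => rfl, by simp +contextual⟩
    set l := W.max' hW
    have hl : l ∈ W := W.max'_mem hW
    have hWl : ∀ w ∈ W, w ≤ l := fun w hw => W.le_max' w hw
    simp only [Finset.forall_mem_insert] at hgap ⊢
    obtain ⟨ψ₀, hψ₀_fix, hψ₀⟩ := ih fun a ha b hb hab hempty =>
      (hgap.2 a ha).2 b hb hab ⟨fun h => h.2.not_gt (hm b hb), hempty⟩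
    obtain ⟨ψ₁, hψ₁_fix, hψ₁⟩ := (hgap.2 l hl).1 (hm l hl)
      ⟨fun h => h.2.false, fun w hw h => h.1.not_ge (hWl w hw)⟩
    obtain ⟨ψ, hψ_le, hψ_ge⟩ := exists_orderIso_eq_of_le_of_eq_of_ge (l := l)
      (fun t ht => hψ₀_fix t (.inr fun a _ b hb h => (h.2.trans_le (hWl b hb)).not_ge ht))
      (fun t ht => hψ₁_fix t fun h => h.1.not_ge ht)
    have hR : ∀ a ∈ W, ∀ t, a < t → t < m → t ∉ W → R t (ψ t) := by
      intro a ha t hat htm htW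
      rcases le_or_gt t l with htl | hlt
      · rw [hψ_le t htl]
        exact hψ₀ a ha l hl t ⟨hat, htl.lt_of_ne fun h => htW (h ▸ hl)⟩ htW
      · rw [hψ_ge t hlt.le]
        exact hψ₁ t ⟨hlt, htm⟩
    refine ⟨ψ, fun t ht => ?_, ⟨fun t h => absurd h.2 h.1.not_gt,
      fun b hb t h => absurd (hm b hb) (h.1.trans h.2).not_gt⟩, fun a ha =>
      ⟨fun t h htW => hR a ha t h.1 h.2 fun h => htW (Finset.mem_insert_of_mem h),
      fun b hb t h htW => hR a ha t h.1 (h.2.trans (hm b hb)) fun h =>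
        htW (Finset.mem_insert_of_mem h)⟩⟩
    rcases le_or_gt t l with htl | hlt
    · rw [hψ_le t htl]
      exact hψ₀_fix t (by grind)
    · rw [hψ_ge t hlt.le]
      exact hψ₁_fix t (by grind)

end OrderIso

section Sign

theorem eq_zero_iff_of_sign_eq {α : Type*} [Zero α] [LinearOrder α] {a b : α}
    (h : sign a = sign b) : a = 0 ↔ b = 0 := by
  rw [← sign_eq_zero_iff, h, sign_eq_zero_iff]

theorem sign_eq_of_isPreconnected {X α : Type*} [TopologicalSpace X] [Zero α] [LinearOrder α]
    [TopologicalSpace α] [OrderTopology α] {f : X → α} {s : Set X} (hs : IsPreconnected s)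
    (hf : ContinuousOn f s) (h0 : ∀ x ∈ s, f x ≠ 0) {x y : X} (hx : x ∈ s) (hy : y ∈ s) :
    sign (f x) = sign (f y) :=
  hs.constant (fun z hz =>
    (continuousAt_sign_of_ne_zero (h0 z hz)).comp_continuousWithinAt (hf z hz)) hx hy

theorem sign_eq_sign_sub_of_strictMonoOn {α β : Type*} [AddCommGroup α] [LinearOrder α]
    [IsOrderedAddMonoid α] [Zero β] [LinearOrder β] {f : α → β} {s : Set α}
    (hf : StrictMonoOn f s) {a t : α} (ha : a ∈ s) (ht : t ∈ s) (hfa : f a = 0) :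
    sign (f t) = sign (t - a) := by
  rcases lt_trichotomy t a with h | rfl | h
  · rw [sign_neg (sub_neg.2 h), sign_neg (hfa ▸ hf ht ha h)]
  · rw [hfa, sub_self, sign_zero, sign_zero]
  · rw [sign_pos (sub_pos.2 h), sign_pos (hfa ▸ hf ha ht h)]

theorem sign_orderIso_sub_orderIso {α β : Type*} [AddCommGroup α] [LinearOrder α]
    [IsOrderedAddMonoid α] [AddCommGroup β] [LinearOrder β] [IsOrderedAddMonoid β] (ψ : α ≃o β)
    (s t : α) : sign (ψ t - ψ s) = sign (t - s) := by
  rw [sign_eq_sign_sub_of_strictMonoOn (f := fun u => ψ u - ψ s) (fun u _ v _ h =>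
    sub_lt_sub_right (ψ.strictMono h) _) (Set.mem_univ s) (Set.mem_univ t) (sub_self _)]

theorem exists_orderIso_sign_eq_of_strictMonoOn {f g : ℝ → ℝ} {l r : ℝ} (hlr : l ≤ r)
    (hfc : ContinuousOn f (Set.Icc l r)) (hgc : ContinuousOn g (Set.Icc l r))
    (hf : StrictMonoOn f (Set.Icc l r)) (hg : StrictMonoOn g (Set.Icc l r))
    (hl : sign (f l) = sign (g l)) (hr : sign (f r) = sign (g r)) :
    ∃ ψ : ℝ ≃o ℝ, (∀ t ∉ Set.Ioo l r, ψ t = t) ∧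
      ∀ t ∈ Set.Ioo l r, sign (f t) = sign (g (ψ t)) := by
  have hl_mem : l ∈ Set.Icc l r := Set.left_mem_Icc.2 hlr
  have hr_mem : r ∈ Set.Icc l r := Set.right_mem_Icc.2 hlr
  have hIoo {t : ℝ} (ht : t ∈ Set.Ioo l r) : t ∈ Set.Icc l r := Set.Ioo_subset_Icc_self ht
  rcases le_or_gt 0 (f l) with hfl | hfl
  · have hgl : 0 ≤ g l := by rwa [← sign_nonneg_iff, ← hl, sign_nonneg_iff]
    refine ⟨OrderIso.refl ℝ, fun _ _ => rfl, fun t ht => ?_⟩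
    rw [OrderIso.refl_apply, sign_pos (hfl.trans_lt (hf hl_mem (hIoo ht) ht.1)),
      sign_pos (hgl.trans_lt (hg hl_mem (hIoo ht) ht.1))]
  rcases le_or_gt (f r) 0 with hfr | hfr
  · have hgr : g r ≤ 0 := by rwa [← sign_nonpos_iff, ← hr, sign_nonpos_iff]
    refine ⟨OrderIso.refl ℝ, fun _ _ => rfl, fun t ht => ?_⟩
    rw [OrderIso.refl_apply, sign_neg ((hf (hIoo ht) hr_mem ht.2).trans_le hfr),
      sign_neg ((hg (hIoo ht) hr_mem ht.2).trans_le hgr)]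
  have hgl : g l < 0 := by rwa [← sign_eq_neg_one_iff, ← hl, sign_eq_neg_one_iff]
  have hgr : 0 < g r := by rwa [← sign_eq_one_iff, ← hr, sign_eq_one_iff]
  obtain ⟨a, ha, hfa⟩ := intermediate_value_Ioo hlr hfc ⟨hfl, hfr⟩
  obtain ⟨b, hb, hgb⟩ := intermediate_value_Ioo hlr hgc ⟨hgl, hgr⟩
  obtain ⟨ψ, hψ, rfl⟩ := exists_orderIso_apply_eq ha hb
  refine ⟨ψ, hψ, fun t ht => ?_⟩
  have hψt : ψ t ∈ Set.Ioo l r := by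
    rw [← hψ l (by simp), ← hψ r (by simp)]
    exact ⟨ψ.strictMono ht.1, ψ.strictMono ht.2⟩
  rw [sign_eq_sign_sub_of_strictMonoOn hf (hIoo ha) (hIoo ht) hfa,
    sign_eq_sign_sub_of_strictMonoOn hg (hIoo hb) (hIoo hψt) hgb, sign_orderIso_sub_orderIso]

end Sign

section RealPolynomial

theorem eventually_atTop_sign_eval_eq_leadingCoeff (p : ℝ[X]) :
    ∀ᶠ t in Filter.atTop, sign (p.eval t) = sign p.leadingCoeff := by
  obtain ⟨u, hu, heq⟩ := p.isEquivalent_atTop_lead.exists_eq_mul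
  filter_upwards [heq, hu.eventually_const_lt one_pos, Filter.eventually_gt_atTop 0]
    with t ht hut h0
  simp [ht, sign_mul, sign_pos hut, sign_pos (pow_pos h0 _)]

theorem sign_leadingCoeff_derivative {p : ℝ[X]} (hp : p.derivative ≠ 0) :
    sign p.derivative.leadingCoeff = sign p.leadingCoeff := by
  have hdeg : 0 < p.natDegree :=
    Nat.pos_of_ne_zero fun h => hp (derivative_of_natDegree_zero h)
  rw [leadingCoeff_derivative, sign_mul, sign_pos (Nat.cast_pos.2 hdeg), mul_one]

theorem eventually_atTop_sign_eval_eq_derivative {p : ℝ[X]} (hp : p.derivative ≠ 0) :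
    ∀ᶠ t in Filter.atTop, sign (p.eval t) = sign (p.derivative.eval t) := by
  filter_upwards [eventually_atTop_sign_eval_eq_leadingCoeff p,
    eventually_atTop_sign_eval_eq_leadingCoeff p.derivative] with t h h'
  rw [h, h', sign_leadingCoeff_derivative hp]

theorem eventually_atBot_sign_eval_eq_neg_derivative {p : ℝ[X]} (hp : p.derivative ≠ 0) :
    ∀ᶠ t in Filter.atBot, sign (p.eval t) = -sign (p.derivative.eval t) := by
  have hder : (p.comp (-X)).derivative = -p.derivative.comp (-X) := by simp [derivative_comp]
  have hp' : (p.comp (-X)).derivative ≠ 0 := by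
    rw [hder, neg_ne_zero]
    exact fun h => hp (by simpa [comp_assoc] using congrArg (·.comp (-X)) h)
  filter_upwards [Filter.tendsto_neg_atBot_atTop.eventually
    (eventually_atTop_sign_eval_eq_derivative hp')] with t ht
  simpa [hder, Left.sign_neg] using ht

theorem strictMonoOn_eval_orderIso {p : ℝ[X]} (φ : ℝ ≃o ℝ) {l r : ℝ}
    (hpos : ∀ t ∈ Set.Ioo l r, 0 < p.derivative.eval (φ t)) :
    StrictMonoOn (fun t => p.eval (φ t)) (Set.Icc l r) := by
  have hp : StrictMonoOn (p.eval ·) (Set.Icc (φ l) (φ r)) := by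
    refine strictMonoOn_of_deriv_pos (convex_Icc _ _) p.continuousOn fun u hu => ?_
    rw [interior_Icc] at hu
    obtain ⟨t, rfl⟩ := φ.surjective u
    simpa using hpos t ⟨φ.lt_iff_lt.1 hu.1, φ.lt_iff_lt.1 hu.2⟩
  exact hp.comp (φ.strictMono.strictMonoOn _) fun t ht => ⟨φ.monotone ht.1, φ.monotone ht.2⟩

variable {p q : ℝ[X]} {φ : ℝ ≃o ℝ}

theorem exists_orderIso_sign_eval_eq_on_Ioo {l r : ℝ} (hlr : l ≤ r)
    (hderiv : ∀ t, sign (p.derivative.eval t) = sign (q.derivative.eval (φ t)))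
    (h0 : ∀ t ∈ Set.Ioo l r, p.derivative.eval t ≠ 0)
    (hl : sign (p.eval l) = sign (q.eval (φ l))) (hr : sign (p.eval r) = sign (q.eval (φ r))) :
    ∃ ψ : ℝ ≃o ℝ, (∀ t ∉ Set.Ioo l r, ψ t = t) ∧
      ∀ t ∈ Set.Ioo l r, sign (p.eval t) = sign (q.eval (φ (ψ t))) := by
  wlog hpos : ∀ t ∈ Set.Ioo l r, 0 < p.derivative.eval t generalizing p q
  · push Not at hpos
    obtain ⟨s, hs, hs0⟩ := hpos
    have hneg : ∀ t ∈ Set.Ioo l r, p.derivative.eval t < 0 := fun t ht => by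
      rw [← sign_eq_neg_one_iff, sign_eq_of_isPreconnected isPreconnected_Ioo
        p.derivative.continuousOn h0 ht hs, sign_eq_neg_one_iff]
      exact hs0.lt_of_ne (h0 s hs)
    simpa [Left.sign_neg] using this (p := -p) (q := -q)
      (by simpa [Left.sign_neg] using hderiv) (by simpa using h0)
      (by simpa [Left.sign_neg] using hl) (by simpa [Left.sign_neg] using hr)
      (by simpa using hneg)
  refine exists_orderIso_sign_eq_of_strictMonoOn hlr p.continuousOn
    (g := fun t => q.eval (φ t)) (q.continuous.comp φ.continuous).continuousOn
    (strictMonoOn_eval_orderIso (OrderIso.refl ℝ) hpos)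
    (strictMonoOn_eval_orderIso φ fun t ht => ?_) hl hr
  rw [← sign_eq_one_iff, ← hderiv, sign_eq_one_iff]
  exact hpos t ht

theorem eventually_sign_eval_eq (hp : p.derivative ≠ 0)
    (hderiv : ∀ t, sign (p.derivative.eval t) = sign (q.derivative.eval (φ t))) :
    (∀ᶠ t in Filter.atBot, sign (p.eval t) = sign (q.eval (φ t))) ∧
      ∀ᶠ t in Filter.atTop, sign (p.eval t) = sign (q.eval (φ t)) := by
  have hq : q.derivative ≠ 0 := fun h => hp <| Polynomial.funext fun t => by
    rw [eval_zero, ← sign_eq_zero_iff, hderiv, h, eval_zero, sign_zero]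
  constructor
  · filter_upwards [eventually_atBot_sign_eval_eq_neg_derivative hp,
      φ.tendsto_atBot.eventually (eventually_atBot_sign_eval_eq_neg_derivative hq)] with t h h'
    rw [h, h', hderiv]
  · filter_upwards [eventually_atTop_sign_eval_eq_derivative hp,
      φ.tendsto_atTop.eventually (eventually_atTop_sign_eval_eq_derivative hq)] with t h h'
    rw [h, h', hderiv]

theorem exists_orderIso_sign_eval_eq (W : Finset ℝ) (hp : p.derivative ≠ 0)
    (hderiv : ∀ t, sign (p.derivative.eval t) = sign (q.derivative.eval (φ t)))
    (hroots : p.derivative.roots.toFinset ⊆ W)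
    (hW : ∀ w ∈ W, sign (p.eval w) = sign (q.eval (φ w))) :
    ∃ ψ : ℝ ≃o ℝ, (∀ w ∈ W, ψ w = w) ∧ ∀ t, sign (p.eval t) = sign (q.eval (φ (ψ t))) := by
  obtain ⟨hbot, htop⟩ := eventually_sign_eval_eq hp hderiv
  obtain ⟨L, hL⟩ := Filter.eventually_atBot.1 hbot
  obtain ⟨R, hR⟩ := Filter.eventually_atTop.1 htop
  let V := insert L (insert R W)
  have hVW {w : ℝ} (hw : w ∈ W) : w ∈ V := by simp [V, hw]
  have hV : ∀ v ∈ V, sign (p.eval v) = sign (q.eval (φ v)) := by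
    simpa [V] using ⟨hL L le_rfl, hR R le_rfl, hW⟩
  obtain ⟨ψ, hψ_fix, hψ⟩ := exists_orderIso_of_forall_gap V
    (R := fun s t => sign (p.eval s) = sign (q.eval (φ t))) fun l hl r hr hlr hgap =>
      exists_orderIso_sign_eval_eq_on_Ioo hlr.le hderiv (fun t ht h0 => hgap t
        (hVW (hroots (Multiset.mem_toFinset.2 ((mem_roots hp).2 h0)))) ht) (hV l hl) (hV r hr)
  refine ⟨ψ, fun w hw => hψ_fix w (.inl (hVW hw)), fun t => ?_⟩
  by_cases ht : t ∈ V
  · rw [hψ_fix t (.inl ht), hV t ht]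
  by_cases hin : ∃ l ∈ V, ∃ r ∈ V, t ∈ Set.Ioo l r
  · obtain ⟨l, hl, r, hr, hlr⟩ := hin
    exact hψ l hl r hr t hlr ht
  push Not at hin
  rw [hψ_fix t (.inr hin)]
  rcases le_or_gt t L with htL | htL
  · exact hL t htL
  · exact hR t (not_lt.1 fun htR => hin L (by simp [V]) R (by simp [V]) ⟨htL, htR⟩)

theorem sign_eval_orderIso_eq (p : ℝ[X]) (ψ : ℝ ≃o ℝ) (hψ : ∀ w ∈ p.roots, ψ w = w) (t : ℝ) :
    sign (p.eval (ψ t)) = sign (p.eval t) := by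
  rcases eq_or_ne p 0 with rfl | hp
  · simp
  rcases eq_or_ne (ψ t) t with ht | ht
  · rw [ht]
  refine sign_eq_of_isPreconnected isPreconnected_uIcc p.continuousOn (fun u hu hu0 => ht ?_)
    Set.left_mem_uIcc Set.right_mem_uIcc
  have hψu : ψ u = u := hψ u ((mem_roots hp).2 hu0)
  rcases Set.mem_uIcc.1 hu with ⟨h1, h2⟩ | ⟨h1, h2⟩
  · obtain rfl : u = t := h2.antisymm (ψ.le_iff_le.1 (h1.trans hψu.ge))
    exact hψu
  · obtain rfl : u = t := (ψ.le_iff_le.1 (hψu.le.trans h2)).antisymm h1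
    exact hψu

end RealPolynomial

section SignDiagram

theorem map_eraseLead_of_map_leadingCoeff_eq_zero {R S : Type*} [Semiring R] [Semiring S]
    {f : R →+* S} {p : R[X]} (h : f p.leadingCoeff = 0) : p.eraseLead.map f = p.map f := by
  conv_rhs => rw [← p.eraseLead_add_C_mul_X_pow, Polynomial.map_add, Polynomial.map_mul, map_C, h,
    C_0, zero_mul, add_zero]

variable {A : Type*} [CommRing A]

/-- Two real points of `A`, that is, two ring homomorphisms `A →+* ℝ`, give the same sign to every
element of `G`. -/
def SameSigns (G : Set A) (x y : A →+* ℝ) : Prop :=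
  ∀ g ∈ G, sign (x g) = sign (y g)

theorem SameSigns.mono {G H : Set A} {x y : A →+* ℝ} (h : SameSigns H x y) (hGH : G ⊆ H) :
    SameSigns G x y :=
  fun g hg => h g (hGH hg)

-- `r` is a pseudo-remainder: each division step multiplies by the square of the leading coefficient
-- of `q`, which preserves signs.
theorem exists_natDegree_lt_sign_eval₂_eq (p : A[X]) {q : A[X]} (hq : 0 < q.natDegree) :
    ∃ r : A[X], r.natDegree < q.natDegree ∧ ∀ (x : A →+* ℝ) (t : ℝ), x q.leadingCoeff ≠ 0 →
      q.eval₂ x t = 0 → sign (p.eval₂ x t) = sign (r.eval₂ x t) := by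
  induction hn : p.natDegree using Nat.strong_induction_on generalizing p with
  | _ n ih =>
    subst hn
    rcases lt_or_ge p.natDegree q.natDegree with hpq | hqp
    · exact ⟨p, hpq, fun _ _ _ _ => rfl⟩
    obtain ⟨r, hr, hsign⟩ := ih _ ((natDegree_C_mul_le q.leadingCoeff _).trans_lt
      (natDegree_cancelLeads_lt_of_natDegree_le_natDegree hqp (hq.trans_le hqp))) _ rfl
    refine ⟨r, hr, fun x t hx hqt => ?_⟩
    have hp : (C q.leadingCoeff * q.cancelLeads p).eval₂ x t =
        x q.leadingCoeff ^ 2 * p.eval₂ x t := by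
      simp only [cancelLeads, Nat.sub_eq_zero_of_le hqp, pow_zero, mul_one, eval₂_mul, eval₂_C,
        eval₂_sub, eval₂_X_pow, hqt, mul_zero, sub_zero]
      ring
    rw [← hsign x t hx hqt, hp, sign_mul, sign_pos (sq_pos_of_ne_zero hx), one_mul]

theorem exists_finset_sign_eval₂_eq_of_eval₂_eq_zero (p q : A[X]) :
    ∃ R : Finset A[X], (∀ r ∈ R, r.natDegree < q.natDegree) ∧ ∀ (x y : A →+* ℝ) (t u : ℝ),
      (∀ j, sign (x (q.coeff j)) = sign (y (q.coeff j))) → q.map x ≠ 0 →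
      q.eval₂ x t = 0 → q.eval₂ y u = 0 →
      SameSigns (R : Set A[X]) (eval₂RingHom x t) (eval₂RingHom y u) →
      sign (p.eval₂ x t) = sign (p.eval₂ y u) := by
  classical
  induction hn : q.natDegree using Nat.strong_induction_on generalizing q with
  | _ n ih =>
    subst hn
    rcases Nat.eq_zero_or_pos q.natDegree with hq | hq
    · refine ⟨∅, by simp, fun x y t u _ hqx hqt => absurd ?_ hqx⟩
      rw [eq_C_of_natDegree_eq_zero hq] at hqt ⊢
      rw [map_C, ← C_0, ← hqt, eval₂_C]
    have hlt : q.eraseLead.natDegree < q.natDegree :=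
      q.eraseLead_natDegree_le.trans_lt (Nat.sub_lt hq one_pos)
    obtain ⟨R, hR, hR_sign⟩ := ih _ hlt q.eraseLead rfl
    obtain ⟨r, hr, hr_sign⟩ := exists_natDegree_lt_sign_eval₂_eq p hq
    refine ⟨insert r R, by simpa [hr] using fun s hs => (hR s hs).trans hlt,
      fun x y t u hxy hqx hqt hqu h => ?_⟩
    have hlead : x q.leadingCoeff = 0 ↔ y q.leadingCoeff = 0 :=
      eq_zero_iff_of_sign_eq (hxy q.natDegree)
    by_cases hx : x q.leadingCoeff = 0
    · have hxe := map_eraseLead_of_map_leadingCoeff_eq_zero hx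
      have hye := map_eraseLead_of_map_leadingCoeff_eq_zero (hlead.1 hx)
      refine hR_sign x y t u (fun j => ?_) (hxe ▸ hqx) ?_ ?_ (h.mono (by simp))
      · rw [eraseLead_coeff]
        split_ifs
        · simp
        · exact hxy j
      · rw [← eval_map, hxe, eval_map, hqt]
      · rw [← eval_map, hye, eval_map, hqu]
    · rw [hr_sign x t hx hqt, hr_sign y u (mt hlead.2 hx) hqu]
      exact h r (by simp)

theorem exists_finset_sign_eval₂_eq_of_mem_of_eval₂_eq_zero (p : A[X]) (Q : Finset A[X]) :
    ∃ (G : Finset A) (R : Finset A[X]), (∀ r ∈ R, ∃ q ∈ Q, r.natDegree < q.natDegree) ∧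
      ∀ (x y : A →+* ℝ) (t u : ℝ), SameSigns (G : Set A) x y →
        SameSigns (Q ∪ R : Set A[X]) (eval₂RingHom x t) (eval₂RingHom y u) →
        ∀ q ∈ Q, q.map x ≠ 0 → q.eval₂ x t = 0 → sign (p.eval₂ x t) = sign (p.eval₂ y u) := by
  classical
  choose rem hrem_deg hrem using exists_finset_sign_eval₂_eq_of_eval₂_eq_zero p
  refine ⟨Q.biUnion coeffs, Q.biUnion rem, fun r hr => ?_, fun x y t u hG hQR q hq hqx hqt => ?_⟩
  · obtain ⟨q, hq, hrq⟩ := Finset.mem_biUnion.1 hr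
    exact ⟨q, hq, hrem_deg q r hrq⟩
  refine hrem q x y t u (fun j => ?_) hqx hqt ((eq_zero_iff_of_sign_eq (hQR q (.inl hq))).1 hqt)
    (hQR.mono ((Finset.coe_subset.2 (Finset.subset_biUnion_of_mem rem hq)).trans
      Set.subset_union_right))
  by_cases hj : q.coeff j = 0
  · simp [hj]
  · exact hG _ (Finset.mem_coe.2 (Finset.mem_biUnion.2 ⟨q, hq, coeff_mem_coeffs hj⟩))

theorem exists_orderIso_sameSigns_insert {Q : Finset A[X]} {p : A[X]} {x y : A →+* ℝ} {φ : ℝ ≃o ℝ}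
    (hpQ : derivative p ∈ Q) (hp : derivative (p.map x) ≠ 0)
    (hφ : ∀ t, SameSigns (Q : Set A[X]) (eval₂RingHom x t) (eval₂RingHom y (φ t)))
    (hroots : ∀ q ∈ Q, q.map x ≠ 0 → ∀ t, q.eval₂ x t = 0 →
      sign (p.eval₂ x t) = sign (p.eval₂ y (φ t))) :
    ∃ φ' : ℝ ≃o ℝ, ∀ t,
      SameSigns (insert p (Q : Set A[X])) (eval₂RingHom x t) (eval₂RingHom y (φ' t)) := by
  classical
  simp only [SameSigns, coe_eval₂RingHom, ← eval_map, Finset.mem_coe] at hφ hroots ⊢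
  obtain ⟨ψ, hψ, hpψ⟩ := exists_orderIso_sign_eval_eq
    (q := p.map y) (Q.biUnion fun q => (q.map x).roots.toFinset) hp
    (fun t => by simpa only [derivative_map] using hφ t _ hpQ)
    (by simpa only [derivative_map] using
      Finset.subset_biUnion_of_mem (fun q => (q.map x).roots.toFinset) hpQ)
    (by
      simp only [Finset.mem_biUnion, Multiset.mem_toFinset]
      rintro w ⟨q, hq, hw⟩
      exact hroots q hq (ne_zero_of_mem_roots hw) w (isRoot_of_mem_roots hw))
  refine ⟨ψ.trans φ, fun t => Set.forall_mem_insert.2 ⟨hpψ t, fun q hq => ?_⟩⟩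
  rw [OrderIso.trans_apply, ← hφ (ψ t) q hq]
  refine (sign_eval_orderIso_eq _ ψ (fun w hw => hψ w ?_) t).symm
  exact Finset.mem_biUnion.2 ⟨q, hq, Multiset.mem_toFinset.2 hw⟩

/-- The sign diagram of a family of polynomials in one variable with coefficients in `A` is
determined, up to a reparametrization of the line, by the signs of finitely many elements of
`A`. -/
def HasDeterminedSignDiagram (F : Set A[X]) : Prop :=
  ∃ G : Finset A, ∀ x y : A →+* ℝ, SameSigns (G : Set A) x y →
    ∃ φ : ℝ ≃o ℝ, ∀ t, SameSigns F (eval₂RingHom x t) (eval₂RingHom y (φ t))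

theorem hasDeterminedSignDiagram_of_natDegree_eq_zero (F : Finset A[X])
    (hF : ∀ p ∈ F, p.natDegree = 0) : HasDeterminedSignDiagram (F : Set A[X]) := by
  classical
  refine ⟨F.image (coeff · 0), fun x y h => ⟨OrderIso.refl ℝ, fun t p hp => ?_⟩⟩
  rw [eq_C_of_natDegree_eq_zero (hF p hp)]
  simpa using h _ (Finset.mem_coe.2 (Finset.mem_image_of_mem _ hp))

theorem sign_eval₂_eq_of_sign_eval₂_eraseLead_eq {p : A[X]} {x y : A →+* ℝ} {t u : ℝ}
    (hx : x p.leadingCoeff = 0) (hy : y p.leadingCoeff = 0)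
    (h : sign (p.eraseLead.eval₂ x t) = sign (p.eraseLead.eval₂ y u)) :
    sign (p.eval₂ x t) = sign (p.eval₂ y u) := by
  rwa [← eval_map, ← eval_map, map_eraseLead_of_map_leadingCoeff_eq_zero hx,
    map_eraseLead_of_map_leadingCoeff_eq_zero hy, eval_map, eval_map] at h

theorem exists_finset_hasDeterminedSignDiagram_insert {p : A[X]} (hp : 0 < p.natDegree)
    {F : Finset A[X]} (hF : ∀ q ∈ F, q.natDegree ≤ p.natDegree) :
    ∃ R : Finset A[X], (∀ r ∈ R, r.natDegree < p.natDegree) ∧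
      (HasDeterminedSignDiagram (F ∪ R : Set A[X]) →
        HasDeterminedSignDiagram (insert p F : Set A[X])) := by
  classical
  have hp'_deg : (derivative p).natDegree < p.natDegree := natDegree_derivative_lt hp.ne'
  have he_deg : p.eraseLead.natDegree < p.natDegree :=
    p.eraseLead_natDegree_le.trans_lt (Nat.sub_lt hp one_pos)
  set Q := insert (derivative p) F
  have hQ_deg : ∀ q ∈ Q, q.natDegree ≤ p.natDegree :=
    Finset.forall_mem_insert _ _ _ |>.2 ⟨hp'_deg.le, hF⟩
  obtain ⟨G₁, R, hR_deg, hR⟩ := exists_finset_sign_eval₂_eq_of_mem_of_eval₂_eq_zero p Q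
  refine ⟨insert p.eraseLead (insert (derivative p) R), ?_, ?_⟩
  · simp only [Finset.forall_mem_insert]
    refine ⟨he_deg, hp'_deg, fun r hr => ?_⟩
    obtain ⟨q, hq, hrq⟩ := hR_deg r hr
    exact hrq.trans_le (hQ_deg q hq)
  rintro ⟨G₀, hG₀⟩
  refine ⟨insert p.leadingCoeff (G₀ ∪ G₁), fun x y h => ?_⟩
  obtain ⟨φ, hφ⟩ := hG₀ x y (h.mono fun g hg => by simp [Finset.mem_coe.1 hg])
  have hlead : x p.leadingCoeff = 0 ↔ y p.leadingCoeff = 0 :=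
    eq_zero_iff_of_sign_eq (h _ (by simp))
  by_cases hx : x p.leadingCoeff = 0
  · refine ⟨φ, fun t => Set.forall_mem_insert.2 ⟨?_, (hφ t).mono Set.subset_union_left⟩⟩
    exact sign_eval₂_eq_of_sign_eval₂_eraseLead_eq hx (hlead.1 hx) (hφ t _ (by simp))
  have hφQR : ∀ t, SameSigns (Q ∪ R : Set A[X]) (eval₂RingHom x t) (eval₂RingHom y (φ t)) :=
    fun t => (hφ t).mono fun q hq => by
      rw [Finset.coe_insert]
      grind
  have hp' : derivative (p.map x) ≠ 0 := by
    rwa [derivative_ne_zero, natDegree_map_of_leadingCoeff_ne_zero x hx, ← Nat.pos_iff_ne_zero]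
  obtain ⟨φ', hφ'⟩ := exists_orderIso_sameSigns_insert (Finset.mem_insert_self _ F) hp'
    (fun t => (hφQR t).mono Set.subset_union_left) fun q hq hqx t hqt =>
      hR x y t (φ t) (h.mono fun g hg => by simp [Finset.mem_coe.1 hg]) (hφQR t) q hq hqx hqt
  exact ⟨φ', fun t => (hφ' t).mono (Set.insert_subset_insert (by simp))⟩

theorem hasDeterminedSignDiagram_coe (F : Finset A[X]) :
    HasDeterminedSignDiagram (F : Set A[X]) := by
  classical
  -- A step replaces the degree of `p` by finitely many smaller ones.
  have hwf := InvImage.wf (fun F : Finset A[X] => F.val.map natDegree)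
    Multiset.wellFounded_isDershowitzMannaLT
  refine hwf.induction (C := fun F : Finset A[X] => HasDeterminedSignDiagram (F : Set A[X])) F
    fun F ih => ?_
  by_cases h0 : ∀ p ∈ F, p.natDegree = 0
  · exact hasDeterminedSignDiagram_of_natDegree_eq_zero F h0
  push Not at h0
  obtain ⟨q, hqF, hq0⟩ := h0
  obtain ⟨p, hpF, hmax⟩ := F.exists_max_image natDegree ⟨q, hqF⟩
  obtain ⟨R, hR, hstep⟩ := exists_finset_hasDeterminedSignDiagram_insert
    ((Nat.pos_of_ne_zero hq0).trans_le (hmax q hqF))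
    (F := F.erase p) fun q hq => hmax q (Finset.mem_of_mem_erase hq)
  rw [← Finset.coe_insert, Finset.insert_erase hpF, ← Finset.coe_union,
    ← Finset.union_sdiff_self_eq_union] at hstep
  refine hstep (ih _ ⟨(F.erase p).val.map natDegree, (R \ F.erase p).val.map natDegree,
    {p.natDegree}, Multiset.singleton_ne_zero _, ?_, ?_, ?_⟩)
  · change Multiset.map _ _ = _
    rw [← Finset.disjUnion_eq_union _ _ Finset.disjoint_sdiff, Finset.disjUnion_val,
      Multiset.map_add]
  · change Multiset.map _ _ = _
    rw [Finset.erase_val, add_comm, Multiset.singleton_add, ← Multiset.map_cons,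
      Multiset.cons_erase hpF]
  · simp only [Multiset.mem_map, Finset.mem_val, Finset.mem_sdiff]
    rintro _ ⟨r, ⟨hr, -⟩, rfl⟩
    exact ⟨_, Multiset.mem_singleton_self _, hR r hr⟩

end SignDiagram

section SignDetermined

variable {A B : Type*} [CommRing A] [CommRing B]

/-- A condition on the real points `A →+* ℝ` of `A` is sign-determined if it depends only on the
signs of finitely many elements of `A`; for `A = MvPolynomial σ ℝ` these conditions are the
semialgebraic subsets of `σ → ℝ`. -/
def IsSignDetermined (S : (A →+* ℝ) → Prop) : Prop :=
  ∃ G : Finset A, ∀ x y : A →+* ℝ, SameSigns (G : Set A) x y → S x → S y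

theorem IsSignDetermined.congr {S T : (A →+* ℝ) → Prop} (hS : IsSignDetermined S)
    (h : ∀ x, T x ↔ S x) : IsSignDetermined T :=
  (funext fun x => propext (h x) : T = S) ▸ hS

theorem IsSignDetermined.comp {S : (A →+* ℝ) → Prop} (hS : IsSignDetermined S) (f : A →+* B) :
    IsSignDetermined fun x : B →+* ℝ => S (x.comp f) := by
  classical
  obtain ⟨G, hG⟩ := hS
  exact ⟨G.image f, fun x y h => hG _ _ fun g hg =>
    h _ (Finset.mem_coe.2 (Finset.mem_image_of_mem f hg))⟩

theorem IsSignDetermined.and {S T : (A →+* ℝ) → Prop} (hS : IsSignDetermined S)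
    (hT : IsSignDetermined T) : IsSignDetermined fun x => S x ∧ T x := by
  classical
  obtain ⟨G, hG⟩ := hS
  obtain ⟨H, hH⟩ := hT
  refine ⟨G ∪ H, fun x y h => ?_⟩
  rw [Finset.coe_union] at h
  exact And.imp (hG x y (h.mono Set.subset_union_left)) (hH x y (h.mono Set.subset_union_right))

theorem isSignDetermined_pos (a : A) : IsSignDetermined fun x : A →+* ℝ => 0 < x a :=
  ⟨{a}, fun x y h hx => sign_eq_one_iff.1 (h a (by simp) ▸ sign_eq_one_iff.2 hx)⟩

theorem isSignDetermined_forall_map_eq_zero {ι : Type*} [Finite ι] (g : ι → A) :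
    IsSignDetermined fun x : A →+* ℝ => ∀ i, x (g i) = 0 := by
  classical
  have := Fintype.ofFinite ι
  exact ⟨Finset.univ.image g, fun x y h hx i =>
    (eq_zero_iff_of_sign_eq (h (g i) (by simp))).1 (hx i)⟩

theorem IsSignDetermined.exists_eval₂RingHom {S : (A[X] →+* ℝ) → Prop} (hS : IsSignDetermined S) :
    IsSignDetermined fun x : A →+* ℝ => ∃ t : ℝ, S (eval₂RingHom x t) := by
  obtain ⟨F, hF⟩ := hS
  obtain ⟨G, hG⟩ := hasDeterminedSignDiagram_coe F
  refine ⟨G, fun x y h ⟨t, ht⟩ => ?_⟩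
  obtain ⟨φ, hφ⟩ := hG x y h
  exact ⟨φ t, hF _ _ (hφ t) ht⟩

theorem eval₂Hom_comp_rename {σ τ : Type*} (e : σ → τ) (x : A →+* ℝ) (v : τ → ℝ) :
    (MvPolynomial.eval₂Hom x v).comp (MvPolynomial.rename (R := A) e).toRingHom =
      MvPolynomial.eval₂Hom x (v ∘ e) :=
  MvPolynomial.ringHom_ext (by simp) (by simp)

theorem eval₂RingHom_comp_optionEquivLeft {σ : Type*} (x : A →+* ℝ) (v : Option σ → ℝ) :
    (eval₂RingHom (MvPolynomial.eval₂Hom x (v ∘ some)) (v none)).comp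
      (MvPolynomial.optionEquivLeft A σ : MvPolynomial (Option σ) A →+* (MvPolynomial σ A)[X]) =
      MvPolynomial.eval₂Hom x v :=
  MvPolynomial.ringHom_ext (by simp [MvPolynomial.optionEquivLeft_C])
    (by rintro (_ | i) <;> simp)

theorem IsSignDetermined.exists_eval₂Hom {σ : Type*} [Finite σ]
    {S : (MvPolynomial σ A →+* ℝ) → Prop} (hS : IsSignDetermined S) :
    IsSignDetermined fun x : A →+* ℝ => ∃ v : σ → ℝ, S (MvPolynomial.eval₂Hom x v) := by
  induction σ using Finite.induction_empty_option with
  | of_equiv e ih =>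
    refine (ih (hS.comp (MvPolynomial.rename (R := A) e.symm).toRingHom)).congr fun x => ?_
    simp only [eval₂Hom_comp_rename]
    exact (e.symm.arrowCongr (Equiv.refl ℝ)).exists_congr_left
  | h_empty =>
    refine (hS.comp (MvPolynomial.eval₂Hom (RingHom.id A) PEmpty.elim)).congr fun x => ?_
    refine (exists_congr fun v => iff_of_eq (congrArg S ?_)).trans (exists_const _)
    exact MvPolynomial.ringHom_ext (by simp) nofun
  | @h_option τ _ ih =>
    refine (ih (hS.comp (MvPolynomial.optionEquivLeft A τ :
      MvPolynomial (Option τ) A →+* (MvPolynomial τ A)[X])).exists_eval₂RingHom).congr fun x =>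
        ⟨fun ⟨v, hv⟩ => ⟨v ∘ some, v none, ?_⟩, fun ⟨v, t, hvt⟩ => ⟨fun o => o.elim t v, ?_⟩⟩
    · rwa [eval₂RingHom_comp_optionEquivLeft]
    · rwa [← eval₂RingHom_comp_optionEquivLeft]

end SignDetermined

section Intervals

/-- `S` is a union of at most `n` order-connected sets, possibly empty and possibly
overlapping. -/
def IsUnionOfIntervals {α : Type*} [Preorder α] (S : Set α) (n : ℕ) : Prop :=
  ∃ (m : ℕ) (J : Fin m → Set α), m ≤ n ∧ (∀ j, (J j).OrdConnected) ∧ S = ⋃ j, J j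

theorem isUnionOfIntervals_of_monotone {α : Type*} [Preorder α] {S : Set α} {r : α → ℕ} {n : ℕ}
    (hr : Monotone r) (hrn : ∀ t, r t < n) (hS : ∀ s t, r s = r t → s ∈ S → t ∈ S) :
    IsUnionOfIntervals S n := by
  refine ⟨n, fun j => {t | t ∈ S ∧ r t = j}, le_rfl, fun j => ⟨?_⟩, ?_⟩
  · rintro s ⟨hs, hsj⟩ t ⟨-, htj⟩ u ⟨hsu, hut⟩
    have huj : r u = j := le_antisymm (htj ▸ hr hut) (hsj ▸ hr hsu)
    exact ⟨hS s u (hsj.trans huj.symm) hs, huj⟩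
  · ext t
    simp only [Set.mem_iUnion, Set.mem_ofPred_eq]
    exact ⟨fun ht => ⟨⟨r t, hrn t⟩, ht, rfl⟩, fun ⟨_, ht, _⟩ => ht⟩

theorem isUnionOfIntervals_of_finset {α : Type*} [LinearOrder α] {S : Set α} (Z : Finset α)
    (hS : ∀ s t, (∀ z ∈ Z, z ∉ Set.uIcc s t) → s ∈ S → t ∈ S) :
    IsUnionOfIntervals S (2 * Z.card + 1) := by
  -- `r` jumps once on reaching a point of `Z` and once more on leaving it.
  let r : α → ℕ := fun t => ∑ z ∈ Z, ((if z < t then 1 else 0) + if z ≤ t then 1 else 0)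
  have hr_term {s t : α} (hst : s ≤ t) (z : α) :
      ((if z < s then 1 else 0) + if z ≤ s then 1 else 0) ≤
        (if z < t then 1 else 0) + if z ≤ t then 1 else 0 := by
    split_ifs <;> grind
  have hr : Monotone r := fun s t hst => Finset.sum_le_sum fun z _ => hr_term hst z
  have hr_lt {s t : α} (hst : s < t) (hrst : r s = r t) : ∀ z ∈ Z, z ∉ Set.Icc s t := by
    intro z hz hzst
    have := (Finset.sum_eq_sum_iff_of_le fun z _ => hr_term hst.le z).1 hrst z hz
    grind
  refine isUnionOfIntervals_of_monotone hr (fun t => ?_) fun s t hrst hs => ?_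
  · rw [Nat.lt_succ_iff, mul_comm, ← smul_eq_mul]
    exact Finset.sum_le_card_nsmul _ _ _ fun z _ => by split_ifs <;> simp
  · rcases lt_trichotomy s t with hst | rfl | hts
    · exact hS s t (by simpa only [Set.uIcc_of_le hst.le] using hr_lt hst hrst) hs
    · exact hs
    · exact hS s t (by simpa only [Set.uIcc_of_ge hts.le] using hr_lt hts hrst.symm) hs

theorem IsUnionOfIntervals.mono {α : Type*} [Preorder α] {S : Set α} {m n : ℕ}
    (h : IsUnionOfIntervals S m) (hmn : m ≤ n) : IsUnionOfIntervals S n :=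
  let ⟨k, J, hkm, hJ⟩ := h
  ⟨k, J, hkm.trans hmn, hJ⟩

theorem isUnionOfIntervals_of_sign_eval {ι : Type*} (G : Finset ι) (f : ι → ℝ[X]) {S : Set ℝ}
    (hS : ∀ s t, (∀ i ∈ G, sign ((f i).eval s) = sign ((f i).eval t)) → s ∈ S → t ∈ S) :
    IsUnionOfIntervals S (2 * ∑ i ∈ G, (f i).natDegree + 1) := by
  classical
  let Z := G.biUnion fun i => (f i).roots.toFinset
  have hZ : Z.card ≤ ∑ i ∈ G, (f i).natDegree :=
    Finset.card_biUnion_le.trans <| Finset.sum_le_sum fun i _ =>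
      (f i).roots.toFinset_card_le.trans (f i).card_roots'
  refine (isUnionOfIntervals_of_finset Z fun s t hst => hS s t fun i hi => ?_).mono (by lia)
  rcases eq_or_ne (f i) 0 with h0 | h0
  · simp [h0]
  refine sign_eq_of_isPreconnected isPreconnected_uIcc (f i).continuousOn (fun u hu hu0 => ?_)
    Set.left_mem_uIcc Set.right_mem_uIcc
  exact hst u (Finset.mem_biUnion.2 ⟨i, hi, Multiset.mem_toFinset.2 ((mem_roots h0).2 hu0)⟩) hu

theorem IsSignDetermined.exists_isUnionOfIntervals {A : Type*} [CommRing A]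
    {S : (A[X] →+* ℝ) → Prop} (hS : IsSignDetermined S) :
    ∃ n, ∀ x : A →+* ℝ, IsUnionOfIntervals {t | S (eval₂RingHom x t)} n := by
  obtain ⟨G, hG⟩ := hS
  refine ⟨2 * ∑ g ∈ G, g.natDegree + 1, fun x => ?_⟩
  refine (isUnionOfIntervals_of_sign_eval G (fun g => g.map x) fun s t hst =>
    hG _ _ fun g hg => ?_).mono (by gcongr; exact natDegree_map_le)
  simpa only [coe_eval₂RingHom, eval_map] using hst g hg

end Intervals

section Semialgebraic

variable {σ : Type*}

/-- Semialgebraic subsets of affine space; the real points of `MvPolynomial σ ℝ` are the evaluations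
at points of `σ → ℝ`. -/
def IsSemialgebraic (T : Set (σ → ℝ)) : Prop :=
  IsSignDetermined fun x : MvPolynomial σ ℝ →+* ℝ => (fun i => x (MvPolynomial.X i)) ∈ T

theorem isSemialgebraic_setOf_eval_pos (p : MvPolynomial σ ℝ) :
    IsSemialgebraic {v | 0 < MvPolynomial.eval v p} := by
  refine (isSignDetermined_pos p).congr fun x => ?_
  have hx : MvPolynomial.eval (fun i => x (MvPolynomial.X i)) = x :=
    MvPolynomial.ringHom_ext (fun a => (MvPolynomial.eval_C a).trans <|
      RingHom.congr_fun (Subsingleton.elim (RingHom.id ℝ) (x.comp MvPolynomial.C)) a) (by simp)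
  rw [Set.mem_ofPred_eq, hx]

theorem isSemialgebraic_cylinder (d : ℕ) :
    IsSemialgebraic {x : Fin (d + 1) → ℝ | (∑ i : Fin d, x i.castSucc ^ 2) < 1} := by
  convert! isSemialgebraic_setOf_eval_pos
    (1 - ∑ i : Fin d, MvPolynomial.X (i.castSucc : Fin (d + 1)) ^ 2) using 1
  ext x
  simp

theorem exists_mvPolynomial_forall_map_eq [Finite σ] {ι R : Type*} [CommSemiring R] {N : ℕ}
    (f : ι → MvPolynomial σ R) (hf : ∀ a, (f a).totalDegree ≤ N) :
    ∃ F : MvPolynomial σ (ι → R), ∀ a, F.map (Pi.evalRingHom (fun _ => R) a) = f a := by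
  have hfin : {m : σ →₀ ℕ | m.degree ≤ N}.Finite := Finsupp.finite_of_degree_le N
  refine ⟨∑ m ∈ hfin.toFinset, MvPolynomial.monomial m fun a => (f a).coeff m, fun a => ?_⟩
  simp only [map_sum, MvPolynomial.map_monomial, Pi.evalRingHom_apply]
  conv_rhs => rw [MvPolynomial.as_sum (f a)]
  refine (Finset.sum_subset (fun m hm => ?_) fun m _ hm => ?_).symm
  · rw [Set.Finite.mem_toFinset]
    exact (MvPolynomial.le_totalDegree hm).trans (hf a)
  · rw [MvPolynomial.notMem_support_iff.1 hm, MvPolynomial.monomial_zero]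

theorem exists_polynomial_forall_map_eq {ι R : Type*} [Semiring R] {N : ℕ} (f : ι → R[X])
    (hf : ∀ a, (f a).natDegree ≤ N) :
    ∃ F : (ι → R)[X], ∀ a, F.map (Pi.evalRingHom (fun _ => R) a) = f a := by
  refine ⟨∑ k ∈ Finset.range (N + 1), monomial k fun a => (f a).coeff k, fun a => ?_⟩
  conv_rhs => rw [(f a).as_sum_range' (N + 1) (Nat.lt_succ_of_le (hf a))]
  simp [Polynomial.map_sum]

theorem exists_isUnionOfIntervals_preimage_image_eval₂ [Finite σ] {κ K : Type*} [Finite κ]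
    [CommRing K] [Algebra ℝ K] {T : Set (σ → ℝ)} (hT : IsSemialgebraic T) (P : κ → MvPolynomial σ K)
    (γ : κ → K[X]) :
    ∃ n, ∀ e : K →+* ℝ, IsUnionOfIntervals
      ((fun t i => (γ i).eval₂ e t) ⁻¹' ((fun v i => (P i).eval₂ e v) '' T)) n := by
  have hS := (hT.comp (MvPolynomial.map (algebraMap ℝ K[X]))).and
    (isSignDetermined_forall_map_eq_zero fun i =>
      MvPolynomial.map C (P i) - MvPolynomial.C (γ i))
  obtain ⟨n, hn⟩ := hS.exists_eval₂Hom.exists_isUnionOfIntervals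
  refine ⟨n, fun e => ?_⟩
  convert! hn e using 1
  ext t
  simp [MvPolynomial.eval₂_map, funext_iff, sub_eq_zero]

end Semialgebraic

theorem stmt13_general {σ κ : Type*} [Finite σ] [Finite κ] {T : Set (σ → ℝ)}
    (hT : IsSemialgebraic T) (N : ℕ) :
    ∃ C, ∀ (P : κ → MvPolynomial σ ℝ) (γ : κ → ℝ[X]),
      (∀ i, (P i).totalDegree ≤ N) → (∀ i, (γ i).natDegree ≤ N) →
      IsUnionOfIntervals ((fun t i => (γ i).eval t) ⁻¹' ((fun v i => (P i).eval v) '' T)) C := by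
  let ι := {a : (κ → MvPolynomial σ ℝ) × (κ → ℝ[X]) //
    (∀ i, (a.1 i).totalDegree ≤ N) ∧ ∀ i, (a.2 i).natDegree ≤ N}
  choose P hP using fun i : κ =>
    exists_mvPolynomial_forall_map_eq (fun a : ι => a.1.1 i) fun a => a.2.1 i
  choose γ hγ using fun i : κ =>
    exists_polynomial_forall_map_eq (fun a : ι => a.1.2 i) fun a => a.2.2 i
  obtain ⟨C, hC⟩ := exists_isUnionOfIntervals_preimage_image_eval₂ hT P γ
  refine ⟨C, fun P₀ γ₀ hP₀ hγ₀ => ?_⟩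
  let a : ι := ⟨(P₀, γ₀), hP₀, hγ₀⟩
  simpa only [← eval_map, ← MvPolynomial.eval_map, hP, hγ] using hC (Pi.evalRingHom (fun _ => ℝ) a)

/-- If `det DP` does not vanish on the closed unit cylinder `T̄`, then the preimage under a
polynomial curve `γ` of `P(T)` is a union of boundedly many intervals. -/
theorem stmt13 (d N : ℕ) :
    ∃ C : ℕ, ∀ (P : Fin (d + 1) → MvPolynomial (Fin (d + 1)) ℝ)
      (γ : Fin (d + 1) → Polynomial ℝ),
      (∀ i, (P i).totalDegree ≤ N) → (∀ i, (γ i).natDegree ≤ N) →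
      (∀ x : Fin (d + 1) → ℝ, (∑ i : Fin d, x i.castSucc ^ 2) ≤ 1 →
        Matrix.det (Matrix.of fun i j =>
          MvPolynomial.eval x (MvPolynomial.pderiv j (P i))) ≠ 0) →
      ∃ (m : ℕ) (J : Fin m → Set ℝ), m ≤ C ∧ (∀ j, (J j).OrdConnected) ∧
        (fun t i => Polynomial.eval t (γ i)) ⁻¹'
            ((fun x i => MvPolynomial.eval x (P i)) ''
              {x : Fin (d + 1) → ℝ | (∑ i : Fin d, x i.castSucc ^ 2) < 1}) =
          ⋃ j, J j :=
  (stmt13_general (isSemialgebraic_cylinder d) N).imp fun _ h P γ hP hγ _ => h P γ hP hγ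
end
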